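/- arXiv:0807.4181 — 2 statements merged into one kernel-verified Lean document; each statement's English description precedes it below -/
import Mathlib

section
/- Canonical shrinking soliton equation, spatial components (Theorem 1.1): for every compact set K ⊆ U × (a,b) there exist N₀ ∈ ℕ and C > 0 such that for every integer N ≥ N₀ one has ĝ₀₀ > 0 on a neighbourhood of K, and at every point of K and for all i, j ∈ {1, …, n}: |R̂_{ij} + ∇̂²_{ij}(N/(2τ)) − (1/2) ĝ_{ij}| ≤ C/N, where N/(2τ) denotes the function (x,τ) ↦ N/(2τ) on Û. -/
/-!
The metric `ĝ` is block diagonal, and `N` enters only through `ĝ₀₀ = N/(2τ³) + B` with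
`B = R/τ − n/(2τ²)`. Since the large term `N/(2τ³)` is constant in space, the Christoffel symbols
depend on `N` in a controlled way, uniformly on compact sets:

* `Γ̂^k_{ij} = Γ^k_{ij}` and `Γ̂^k_{0j}` do not depend on `N`;
* `Γ̂⁰_{ij} = ĝ₀₀⁻¹ A_{ij}` with `A_{ij} = -½ ∂_τ (g_{ij}/τ)`, and `Γ̂⁰_{i0} = ½ ĝ₀₀⁻¹ ∂_i B`; these
  symbols and their first derivatives are `O(1/N)`;
* `Γ̂⁰_{00} = ½ ĝ₀₀⁻¹ ∂_τ ĝ₀₀` is `O(1)`.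

In `R̂_{ij}` the terms with spatial summation indices only add up to `R_{ij}`, and every other term
contains a factor `Γ̂⁰_{ij}`, `Γ̂⁰_{i0}` or a derivative of one, so `R̂_{ij} = R_{ij} + O(1/N)`
(`hatRic_succ_succ`, `isBigO_ricRest`). The Hessian of `N/(2τ)` is
`N/(2τ²) Γ̂⁰_{ij} = N/(2τ²) ĝ₀₀⁻¹ A_{ij}` (`hatHess_succ_succ`), while the reverse Ricci flow equation
says `R_{ij} − g_{ij}/(2τ) = −τ A_{ij}` (`accel_eq`). The sum of the two is
`ĝ₀₀⁻¹ A_{ij} (N/(2τ²) − τ ĝ₀₀) = −ĝ₀₀⁻¹ τ A_{ij} B`, which is again `O(1/N)` (`defect_eq`).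

Uniform estimates are expressed as `=O` along the filter `atTop ×ˢ 𝓟 K` on pairs `(N, p)`.
-/

noncomputable section

open scoped BigOperators

namespace CanonicalSoliton

/-- Space-time `ℝⁿ × ℝ`, a point being `(x, τ)`. -/
abbrev E (n : ℕ) := (Fin n → ℝ) × ℝ

variable {n : ℕ}

/-- Spatial partial derivative `∂_{xⁱ}`. -/
def pdx (i : Fin n) (f : E n → ℝ) (p : E n) : ℝ :=
  fderiv ℝ f p (Pi.single i 1, 0)

/-- Time partial derivative `∂_τ`. -/
def pdt (f : E n → ℝ) (p : E n) : ℝ :=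
  fderiv ℝ f p (0, 1)

/-- Coordinate directions on space-time; the index `0` is the time direction `∂/∂τ`,
and the index `i.succ` is the spatial direction `∂/∂xⁱ`. -/
def dir (a : Fin (n + 1)) : E n :=
  Fin.cases ((0 : Fin n → ℝ), (1 : ℝ)) (fun i => (Pi.single i 1, (0 : ℝ))) a

/-- Partial derivative `∂_{x^a}` on space-time, `x⁰ = τ` being time. -/
def pd (a : Fin (n + 1)) (f : E n → ℝ) (p : E n) : ℝ :=
  fderiv ℝ f p (dir a)

variable (g : E n → Matrix (Fin n) (Fin n) ℝ)

/-- Entries `g^{ij}` of the inverse metric. -/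
def ginv (p : E n) : Matrix (Fin n) (Fin n) ℝ := (g p)⁻¹

/-- Christoffel symbols `Γ^i_{jk} = (1/2) g^{il} (∂_{x^j} g_{kl} + ∂_{x^k} g_{jl} − ∂_{x^l} g_{jk})`. -/
def Chr (i j k : Fin n) (p : E n) : ℝ :=
  (1 / 2) * ∑ l, ginv g p i l *
    (pdx j (fun q => g q k l) p + pdx k (fun q => g q j l) p - pdx l (fun q => g q j k) p)

/-- Ricci tensor `R_{jk} = ∂_{x^i} Γ^i_{jk} − ∂_{x^k} Γ^i_{ji} + Γ^i_{jk} Γ^l_{il} − Γ^l_{ji} Γ^i_{lk}`. -/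
def Ric (j k : Fin n) (p : E n) : ℝ :=
  (∑ i, pdx i (Chr g i j k) p) - pdx k (fun q => ∑ i, Chr g i j i q) p
    + (∑ i, ∑ l, Chr g i j k p * Chr g l i l p)
    - ∑ i, ∑ l, Chr g l j i p * Chr g i l k p

/-- Ricci tensor with one index raised: `R^i_j := g^{ik} R_{kj}`. -/
def RicUp (i j : Fin n) (p : E n) : ℝ := ∑ k, ginv g p i k * Ric g k j p

/-- Scalar curvature `R := g^{jk} R_{jk}`. -/
def scal (p : E n) : ℝ := ∑ j, ∑ k, ginv g p j k * Ric g j k p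

/-- `R_τ := ∂_τ R`. -/
def scalτ (p : E n) : ℝ := pdt (scal g) p

/-- Entries of the canonical shrinking-soliton metric `ĝ`:
`ĝ_{ij} = g_{ij}/τ`, `ĝ₀₀ = N/(2τ³) + R/τ − n/(2τ²)`, `ĝ_{0i} = 0`. -/
def hatg (N : ℕ) (a b : Fin (n + 1)) (p : E n) : ℝ :=
  Fin.cases
    (Fin.cases ((N : ℝ) / (2 * p.2 ^ 3) + scal g p / p.2 - (n : ℝ) / (2 * p.2 ^ 2))
      (fun _ => 0) b)
    (fun i => Fin.cases (0 : ℝ) (fun j => g p i j / p.2) b) a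

/-- Entries of the inverse of `ĝ`: `ĝ^{ij} = τ g^{ij}`, `ĝ^{00} = (ĝ₀₀)⁻¹`, `ĝ^{0i} = 0`. -/
def hatginv (N : ℕ) (a b : Fin (n + 1)) (p : E n) : ℝ :=
  Fin.cases
    (Fin.cases (hatg g N 0 0 p)⁻¹ (fun _ => 0) b)
    (fun i => Fin.cases (0 : ℝ) (fun j => p.2 * ginv g p i j) b) a

/-- Christoffel symbols of `ĝ`:
`Γ̂^a_{bc} = (1/2) ĝ^{ad} (∂_{x^b} ĝ_{cd} + ∂_{x^c} ĝ_{bd} − ∂_{x^d} ĝ_{bc})`. -/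
def hatChr (N : ℕ) (a b c : Fin (n + 1)) (p : E n) : ℝ :=
  (1 / 2) * ∑ d, hatginv g N a d p *
    (pd b (hatg g N c d) p + pd c (hatg g N b d) p - pd d (hatg g N b c) p)

/-- Ricci tensor of `ĝ`:
`R̂_{ab} = ∂_{x^c} Γ̂^c_{ab} − ∂_{x^b} Γ̂^c_{ac} + Γ̂^c_{ab} Γ̂^d_{cd} − Γ̂^d_{ac} Γ̂^c_{bd}`. -/
def hatRic (N : ℕ) (a b : Fin (n + 1)) (p : E n) : ℝ :=
  (∑ c, pd c (hatChr g N c a b) p) - pd b (fun q => ∑ c, hatChr g N c a c q) p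
    + (∑ c, ∑ d, hatChr g N c a b p * hatChr g N d c d p)
    - ∑ c, ∑ d, hatChr g N d a c p * hatChr g N c b d p

/-- Hessian with respect to `ĝ`: `∇̂²_{ab} f = ∂_{x^a} ∂_{x^b} f − (∂_{x^c} f) Γ̂^c_{ab}`. -/
def hatHess (N : ℕ) (f : E n → ℝ) (a b : Fin (n + 1)) (p : E n) : ℝ :=
  pd a (fun q => pd b f q) p - ∑ c, pd c f p * hatChr g N c a b p

end CanonicalSoliton

open CanonicalSoliton

namespace CanonicalSoliton

open Asymptotics Filter Topology

/-! ### Partial derivatives of smooth functions on an open set -/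

/-- Smoothness of a real-valued function on a subset of space-time. -/
abbrev SmoothOn {n : ℕ} (Ω : Set (E n)) (f : E n → ℝ) : Prop :=
  ContDiffOn ℝ (⊤ : ℕ∞) f Ω

section Derivatives

variable {n : ℕ} {Ω : Set (E n)}

lemma SmoothOn.differentiableAt (hΩ : IsOpen Ω) {f : E n → ℝ} (hf : SmoothOn Ω f) {p : E n}
    (hp : p ∈ Ω) : DifferentiableAt ℝ f p :=
  (hf.contDiffAt (hΩ.mem_nhds hp)).differentiableAt (by simp)

lemma SmoothOn.pd (hΩ : IsOpen Ω) {f : E n → ℝ} (hf : SmoothOn Ω f) (c : Fin (n + 1)) :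
    SmoothOn Ω (CanonicalSoliton.pd c f) :=
  (hf.fderiv_of_isOpen (m := (⊤ : ℕ∞)) hΩ (by simp)).clm_apply contDiffOn_const

lemma pd_congr (hΩ : IsOpen Ω) {f h : E n → ℝ} (hfh : ∀ q ∈ Ω, f q = h q) {p : E n} (hp : p ∈ Ω)
    (c : Fin (n + 1)) : pd c f p = pd c h p := by
  have : f =ᶠ[𝓝 p] h := Filter.eventually_of_mem (hΩ.mem_nhds hp) hfh
  simp only [pd, this.fderiv_eq]

lemma pd_mul {f h : E n → ℝ} {p : E n} (hf : DifferentiableAt ℝ f p)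
    (hh : DifferentiableAt ℝ h p) (c : Fin (n + 1)) :
    pd c (fun q => f q * h q) p = f p * pd c h p + pd c f p * h p := by
  simp only [pd]
  rw [fderiv_fun_mul hf hh]
  simp [mul_comm]

lemma pd_add {f h : E n → ℝ} {p : E n} (hf : DifferentiableAt ℝ f p)
    (hh : DifferentiableAt ℝ h p) (c : Fin (n + 1)) :
    pd c (fun q => f q + h q) p = pd c f p + pd c h p := by
  simp only [pd]
  rw [fderiv_fun_add hf hh]
  simp

lemma pd_const_mul {f : E n → ℝ} {p : E n} (hf : DifferentiableAt ℝ f p) (r : ℝ)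
    (c : Fin (n + 1)) : pd c (fun q => r * f q) p = r * pd c f p := by
  simp only [pd]
  rw [fderiv_const_mul hf]
  simp

lemma pd_inv {f : E n → ℝ} {p : E n} (hf : DifferentiableAt ℝ f p) (h0 : f p ≠ 0)
    (c : Fin (n + 1)) : pd c (fun q => (f q)⁻¹) p = -((f p)⁻¹ * (f p)⁻¹ * pd c f p) := by
  change fderiv ℝ ((fun t => t⁻¹) ∘ f) p (dir c) = _
  rw [((hasDerivAt_inv h0).comp_hasFDerivAt p hf.hasFDerivAt).fderiv]
  simp only [smul_apply, smul_eq_mul, pd]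
  ring

@[simp] lemma pd_zero (c : Fin (n + 1)) : pd c (fun _ : E n => (0 : ℝ)) = fun _ => 0 := by
  ext p; simp [pd]

/-- No differentiability of `φ` is needed: where `φ` is not differentiable,
`fderiv` takes the value `0`. -/
lemma pd_time (φ : ℝ → ℝ) (i : Fin n) (p : E n) :
    pd i.succ (fun q : E n => φ q.2) p = 0 := by
  by_cases h : DifferentiableAt ℝ (fun q : E n => φ q.2) p
  · have := h.lineDeriv_eq_fderiv (v := dir i.succ)
    rw [pd, ← this, lineDeriv]
    simp [dir]
  · simp [pd, fderiv_zero_of_not_differentiableAt h]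

lemma pd_time_zero {φ : ℝ → ℝ} {φ' : ℝ} {p : E n} (h : HasDerivAt φ φ' p.2) :
    pd 0 (fun q : E n => φ q.2) p = φ' := by
  have h2 : HasFDerivAt (fun q : E n => q.2) (ContinuousLinearMap.snd ℝ (Fin n → ℝ) ℝ) p :=
    hasFDerivAt_snd
  have := h.comp_hasFDerivAt p h2
  change fderiv ℝ (φ ∘ fun q : E n => q.2) p (dir 0) = φ'
  rw [this.fderiv]
  simp [dir]

end Derivatives

/-! ### Smoothness of the inverse metric and of the curvature -/

section Smoothness

variable {n : ℕ} {Ω : Set (E n)}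

lemma smoothOn_det {A : E n → Matrix (Fin n) (Fin n) ℝ}
    (hA : ∀ i j, SmoothOn Ω fun p => A p i j) : SmoothOn Ω fun p => (A p).det := by
  simp only [Matrix.det_apply]
  refine ContDiffOn.sum fun σ _ => ContDiffOn.const_smul _ ?_
  exact contDiffOn_prod fun i _ => hA _ _

variable {g : E n → Matrix (Fin n) (Fin n) ℝ}

lemma smoothOn_ginv (hg : ∀ i j, SmoothOn Ω fun p => g p i j) (hdet : ∀ p ∈ Ω, (g p).det ≠ 0)
    (i j : Fin n) : SmoothOn Ω fun p => ginv g p i j := by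
  have : (fun p => ginv g p i j) =
      fun p => ((g p).det)⁻¹ * ((g p).updateRow j (Pi.single i 1)).det := by
    ext p
    simp [ginv, Matrix.inv_def, Matrix.adjugate_apply]
  rw [this]
  refine ((smoothOn_det hg).inv hdet).mul (smoothOn_det fun k l => ?_)
  by_cases hk : k = j
  · subst hk
    simpa using contDiffOn_const
  · simpa [Matrix.updateRow_ne hk] using hg k l

lemma smoothOn_Chr (hΩ : IsOpen Ω) (hg : ∀ i j, SmoothOn Ω fun p => g p i j)
    (hdet : ∀ p ∈ Ω, (g p).det ≠ 0) (i j k : Fin n) : SmoothOn Ω (Chr g i j k) := by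
  refine contDiffOn_const.mul (ContDiffOn.sum fun l _ => (smoothOn_ginv hg hdet i l).mul ?_)
  exact ((SmoothOn.pd hΩ (hg k l) j.succ).add (SmoothOn.pd hΩ (hg j l) k.succ)).sub
    (SmoothOn.pd hΩ (hg j k) l.succ)

lemma Chr_comm (hΩ : IsOpen Ω) (hsymm : ∀ p ∈ Ω, (g p).IsSymm) (i j k : Fin n) {p : E n}
    (hp : p ∈ Ω) : Chr g i j k p = Chr g i k j p := by
  have h : ∀ l : Fin n, pdx l (fun q => g q j k) p = pdx l (fun q => g q k j) p := fun l =>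
    pd_congr hΩ (fun q hq => (hsymm q hq).apply k j) hp l.succ
  simp only [Chr, h, add_comm (pdx j _ p)]

lemma smoothOn_Ric (hΩ : IsOpen Ω) (hg : ∀ i j, SmoothOn Ω fun p => g p i j)
    (hdet : ∀ p ∈ Ω, (g p).det ≠ 0) (j k : Fin n) : SmoothOn Ω (Ric g j k) := by
  have hC := smoothOn_Chr hΩ hg hdet
  refine (((ContDiffOn.sum fun i _ => SmoothOn.pd hΩ (hC i j k) i.succ).sub
    (SmoothOn.pd hΩ (ContDiffOn.sum fun i _ => hC i j i) k.succ)).add ?_).sub ?_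
  · exact ContDiffOn.sum fun i _ => ContDiffOn.sum fun l _ => (hC i j k).mul (hC l i l)
  · exact ContDiffOn.sum fun i _ => ContDiffOn.sum fun l _ => (hC l j i).mul (hC i l k)

lemma smoothOn_scal (hΩ : IsOpen Ω) (hg : ∀ i j, SmoothOn Ω fun p => g p i j)
    (hdet : ∀ p ∈ Ω, (g p).det ≠ 0) : SmoothOn Ω (scal g) :=
  ContDiffOn.sum fun j _ => ContDiffOn.sum fun k _ =>
    (smoothOn_ginv hg hdet j k).mul (smoothOn_Ric hΩ hg hdet j k)

end Smoothness

/-! ### Christoffel symbols of the soliton metric -/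

/-- The coefficient `1/(2τ³)` of `N` in `ĝ₀₀`. -/
def lead {n : ℕ} (p : E n) : ℝ := (2 * p.2 ^ 3)⁻¹

/-- The part `R/τ − n/(2τ²)` of `ĝ₀₀` that does not depend on `N`. -/
def corr {n : ℕ} (g : E n → Matrix (Fin n) (Fin n) ℝ) (p : E n) : ℝ :=
  scal g p / p.2 - (n : ℝ) / (2 * p.2 ^ 2)

/-- The symmetric tensor `-½ ∂_τ (g_{ij}/τ)`, which equals `ĝ₀₀ Γ̂⁰_{ij}`. -/
def accel {n : ℕ} (g : E n → Matrix (Fin n) (Fin n) ℝ) (i j : Fin n) (p : E n) : ℝ :=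
  -(1 / 2) * pd 0 (fun q => g q i j / q.2) p

/-- The mixed symbols `Γ̂^k_{0j} = Γ̂^k_{j0} = ½ τ g^{kl} ∂_τ (g_{jl}/τ)`. -/
def mixed {n : ℕ} (g : E n → Matrix (Fin n) (Fin n) ℝ) (k j : Fin n) (p : E n) : ℝ :=
  (1 / 2) * ∑ l, p.2 * ginv g p k l * pd 0 (fun q => g q j l / q.2) p

section Symbols

variable {n : ℕ} {Ω : Set (E n)} {g : E n → Matrix (Fin n) (Fin n) ℝ}

lemma hatg_zero_zero (N : ℕ) :
    hatg g N 0 0 = fun p => (N : ℝ) * lead p + corr g p := by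
  ext p
  simp only [hatg, lead, corr, Fin.cases_zero]
  ring

lemma hatg_succ_zero (N : ℕ) (i : Fin n) : hatg g N i.succ 0 = fun _ => 0 := rfl

lemma hatg_zero_succ (N : ℕ) (i : Fin n) : hatg g N 0 i.succ = fun _ => 0 := rfl

lemma hatg_succ_succ (N : ℕ) (i j : Fin n) :
    hatg g N i.succ j.succ = fun p => g p i j / p.2 := rfl

lemma hatginv_zero_zero (N : ℕ) (p : E n) : hatginv g N 0 0 p = (hatg g N 0 0 p)⁻¹ := rfl

lemma hatginv_zero_succ (N : ℕ) (i : Fin n) (p : E n) : hatginv g N 0 i.succ p = 0 := rfl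

lemma hatginv_succ_zero (N : ℕ) (i : Fin n) (p : E n) : hatginv g N i.succ 0 p = 0 := rfl

lemma hatginv_succ_succ (N : ℕ) (i j : Fin n) (p : E n) :
    hatginv g N i.succ j.succ p = p.2 * ginv g p i j := rfl

lemma hatChr_zero_succ_succ (N : ℕ) (i j : Fin n) (p : E n) :
    hatChr g N 0 i.succ j.succ p = (hatg g N 0 0 p)⁻¹ * accel g i j p := by
  simp only [hatChr, Fin.sum_univ_succ, hatginv_zero_zero, hatginv_zero_succ, hatg_succ_zero,
    hatg_succ_succ, pd_zero, accel]
  simp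
  ring

lemma hatChr_zero_succ_zero (N : ℕ) (i : Fin n) (p : E n) :
    hatChr g N 0 i.succ 0 p = (hatg g N 0 0 p)⁻¹ * ((1 / 2) * pd i.succ (hatg g N 0 0) p) := by
  simp only [hatChr, Fin.sum_univ_succ, hatginv_zero_zero, hatginv_zero_succ, hatg_succ_zero,
    pd_zero]
  simp
  ring

lemma hatChr_zero_zero_zero (N : ℕ) (p : E n) :
    hatChr g N 0 0 0 p = (hatg g N 0 0 p)⁻¹ * ((1 / 2) * pd 0 (hatg g N 0 0) p) := by
  simp only [hatChr, Fin.sum_univ_succ, hatginv_zero_zero, hatginv_zero_succ]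
  simp
  ring

lemma hatChr_succ_zero_succ (N : ℕ) (k j : Fin n) (p : E n) :
    hatChr g N k.succ 0 j.succ p = mixed g k j p := by
  simp only [hatChr, Fin.sum_univ_succ, hatginv_succ_zero, hatginv_succ_succ, hatg_succ_succ,
    hatg_zero_succ, pd_zero, mixed]
  simp

lemma hatChr_succ_succ_zero (N : ℕ) (k j : Fin n) (p : E n) :
    hatChr g N k.succ j.succ 0 p = mixed g k j p := by
  simp only [hatChr, Fin.sum_univ_succ, hatginv_succ_zero, hatginv_succ_succ, hatg_succ_succ,
    hatg_zero_succ, hatg_succ_zero, pd_zero, mixed]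
  simp

lemma smoothOn_inv_time (hτ : ∀ p ∈ Ω, 0 < p.2) : SmoothOn Ω fun p : E n => (p.2)⁻¹ :=
  contDiff_snd.contDiffOn.inv fun p hp => (hτ p hp).ne'

lemma pd_succ_div_time (hΩ : IsOpen Ω) (hτ : ∀ p ∈ Ω, 0 < p.2) {f : E n → ℝ}
    (hf : SmoothOn Ω f) (i : Fin n) {p : E n} (hp : p ∈ Ω) :
    pd i.succ (fun q => f q / q.2) p = pd i.succ f p / p.2 := by
  simp only [div_eq_mul_inv]
  rw [pd_mul (hf.differentiableAt hΩ hp) ((smoothOn_inv_time hτ).differentiableAt hΩ hp),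
    pd_time (fun t => t⁻¹)]
  simp

/-- Spatial rescaling by a function of `τ` alone does not change the spatial connection. -/
lemma hatChr_succ_succ_succ (hΩ : IsOpen Ω) (hτ : ∀ p ∈ Ω, 0 < p.2)
    (hg : ∀ i j, SmoothOn Ω fun p => g p i j) (N : ℕ) (k i j : Fin n) {p : E n} (hp : p ∈ Ω) :
    hatChr g N k.succ i.succ j.succ p = Chr g k i j p := by
  have h0 := (hτ p hp).ne'
  simp only [hatChr, Chr, Fin.sum_univ_succ, hatginv_succ_zero, hatginv_succ_succ,
    hatg_succ_succ, zero_mul, zero_add]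
  congr 1
  refine Finset.sum_congr rfl fun l _ => ?_
  rw [pd_succ_div_time hΩ hτ (hg j l) i hp, pd_succ_div_time hΩ hτ (hg i l) j hp,
    pd_succ_div_time hΩ hτ (hg i j) l hp]
  simp only [pdx, pd, dir, Fin.cases_succ]
  field_simp

lemma smoothOn_lead (hτ : ∀ p ∈ Ω, 0 < p.2) : SmoothOn Ω (lead : E n → ℝ) :=
  (contDiffOn_const.mul (contDiff_snd.contDiffOn.pow 3)).inv fun p hp => by
    have := hτ p hp
    positivity

lemma smoothOn_corr (hΩ : IsOpen Ω) (hτ : ∀ p ∈ Ω, 0 < p.2)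
    (hg : ∀ i j, SmoothOn Ω fun p => g p i j) (hdet : ∀ p ∈ Ω, (g p).det ≠ 0) :
    SmoothOn Ω (corr g) := by
  refine ((smoothOn_scal hΩ hg hdet).div contDiff_snd.contDiffOn fun p hp => (hτ p hp).ne').sub
    (contDiffOn_const.div (contDiffOn_const.mul (contDiff_snd.contDiffOn.pow 2)) fun p hp => ?_)
  have := hτ p hp
  positivity

lemma smoothOn_accel (hΩ : IsOpen Ω) (hτ : ∀ p ∈ Ω, 0 < p.2)
    (hg : ∀ i j, SmoothOn Ω fun p => g p i j) (i j : Fin n) : SmoothOn Ω (accel g i j) :=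
  contDiffOn_const.mul (SmoothOn.pd hΩ
    ((hg i j).div contDiff_snd.contDiffOn fun p hp => (hτ p hp).ne') 0)

lemma smoothOn_mixed (hΩ : IsOpen Ω) (hτ : ∀ p ∈ Ω, 0 < p.2)
    (hg : ∀ i j, SmoothOn Ω fun p => g p i j) (hdet : ∀ p ∈ Ω, (g p).det ≠ 0) (k j : Fin n) :
    SmoothOn Ω (mixed g k j) :=
  contDiffOn_const.mul (ContDiffOn.sum fun l _ =>
    (contDiff_snd.contDiffOn.mul (smoothOn_ginv hg hdet k l)).mul (SmoothOn.pd hΩ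
      ((hg j l).div contDiff_snd.contDiffOn fun p hp => (hτ p hp).ne') 0))

lemma smoothOn_hatg_zero_zero (hΩ : IsOpen Ω) (hτ : ∀ p ∈ Ω, 0 < p.2)
    (hg : ∀ i j, SmoothOn Ω fun p => g p i j) (hdet : ∀ p ∈ Ω, (g p).det ≠ 0) (N : ℕ) :
    SmoothOn Ω (hatg g N 0 0) := by
  rw [hatg_zero_zero]
  exact (contDiffOn_const.mul (smoothOn_lead hτ)).add (smoothOn_corr hΩ hτ hg hdet)

lemma pd_hatg_zero_zero (hΩ : IsOpen Ω) (hτ : ∀ p ∈ Ω, 0 < p.2)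
    (hg : ∀ i j, SmoothOn Ω fun p => g p i j) (hdet : ∀ p ∈ Ω, (g p).det ≠ 0) (N : ℕ)
    (c : Fin (n + 1)) {p : E n} (hp : p ∈ Ω) :
    pd c (hatg g N 0 0) p = (N : ℝ) * pd c lead p + pd c (corr g) p := by
  have h1 := (smoothOn_lead hτ).differentiableAt hΩ hp
  rw [hatg_zero_zero, pd_add (h1.const_mul _)
    ((smoothOn_corr hΩ hτ hg hdet).differentiableAt hΩ hp), pd_const_mul h1]

/-- The large term `N/(2τ³)` of `ĝ₀₀` is constant in space, so spatial derivatives of `ĝ₀₀`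
are independent of `N`. -/
lemma pd_succ_hatg_zero_zero (hΩ : IsOpen Ω) (hτ : ∀ p ∈ Ω, 0 < p.2)
    (hg : ∀ i j, SmoothOn Ω fun p => g p i j) (hdet : ∀ p ∈ Ω, (g p).det ≠ 0) (N : ℕ)
    (i : Fin n) {p : E n} (hp : p ∈ Ω) :
    pd i.succ (hatg g N 0 0) p = pd i.succ (corr g) p := by
  have h : pd i.succ (lead : E n → ℝ) p = 0 := pd_time (fun t => (2 * t ^ 3)⁻¹) i p
  rw [pd_hatg_zero_zero hΩ hτ hg hdet N _ hp, h]
  simp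

end Symbols

/-! ### Exact formulas for the Ricci tensor and the Hessian -/

/-- The difference `R̂_{ij} − R_{ij}`: all terms of `R̂_{ij}` in which some summation index is `0`. -/
def ricRest {n : ℕ} (g : E n → Matrix (Fin n) (Fin n) ℝ) (N : ℕ) (i j : Fin n) (p : E n) : ℝ :=
  pd 0 (hatChr g N 0 i.succ j.succ) p - pd j.succ (hatChr g N 0 i.succ 0) p
    + hatChr g N 0 i.succ j.succ p * (hatChr g N 0 0 0 p + ∑ k, mixed g k k p)
    + ∑ k, Chr g k i j p * hatChr g N 0 k.succ 0 p
    - (hatChr g N 0 i.succ 0 p * hatChr g N 0 j.succ 0 p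
      + ∑ l, mixed g l i p * hatChr g N 0 j.succ l.succ p
      + ∑ k, hatChr g N 0 i.succ k.succ p * mixed g k j p)

section Formulas

variable {n : ℕ} {Ω : Set (E n)} {g : E n → Matrix (Fin n) (Fin n) ℝ}

lemma hatChr_zero_succ_zero_of_mem (hΩ : IsOpen Ω) (hτ : ∀ p ∈ Ω, 0 < p.2)
    (hg : ∀ i j, SmoothOn Ω fun p => g p i j) (hdet : ∀ p ∈ Ω, (g p).det ≠ 0) (N : ℕ)
    (i : Fin n) {p : E n} (hp : p ∈ Ω) :
    hatChr g N 0 i.succ 0 p = (hatg g N 0 0 p)⁻¹ * ((1 / 2) * pd i.succ (corr g) p) := by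
  rw [hatChr_zero_succ_zero, pd_succ_hatg_zero_zero hΩ hτ hg hdet N i hp]

lemma hatRic_succ_succ (hΩ : IsOpen Ω) (hτ : ∀ p ∈ Ω, 0 < p.2)
    (hg : ∀ i j, SmoothOn Ω fun p => g p i j) (hdet : ∀ p ∈ Ω, (g p).det ≠ 0) (N : ℕ)
    (hsymm : ∀ p ∈ Ω, (g p).IsSymm)
    (hN : ∀ p ∈ Ω, hatg g N 0 0 p ≠ 0) (i j : Fin n) {p : E n} (hp : p ∈ Ω) :
    hatRic g N i.succ j.succ p = Ric g i j p + ricRest g N i j p := by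
  have hChr : ∀ k i j, ∀ q ∈ Ω, hatChr g N k.succ i.succ j.succ q = Chr g k i j q :=
    fun k i j q hq => hatChr_succ_succ_succ hΩ hτ hg N k i j hq
  have hs : SmoothOn Ω (hatChr g N 0 i.succ 0) := by
    refine ContDiffOn.congr (((smoothOn_hatg_zero_zero hΩ hτ hg hdet N).inv hN).mul
      ((contDiffOn_const (c := (1 / 2 : ℝ))).mul (SmoothOn.pd hΩ (smoothOn_corr hΩ hτ hg hdet) i.succ))) ?_
    exact fun q hq => hatChr_zero_succ_zero_of_mem hΩ hτ hg hdet N i hq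
  have h1 : ∀ k : Fin n, pd k.succ (hatChr g N k.succ i.succ j.succ) p
      = pd k.succ (Chr g k i j) p := fun k => pd_congr hΩ (hChr k i j) hp _
  have h2 : pd j.succ (fun q => ∑ c, hatChr g N c i.succ c q) p
      = pd j.succ (hatChr g N 0 i.succ 0) p + pd j.succ (fun q => ∑ k, Chr g k i k q) p := by
    rw [← pd_add (hs.differentiableAt hΩ hp) (SmoothOn.differentiableAt hΩ
      (ContDiffOn.sum fun k _ => smoothOn_Chr hΩ hg hdet k i k) hp)]
    refine pd_congr hΩ (fun q hq => ?_) hp _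
    rw [Fin.sum_univ_succ]
    simp only [hChr _ _ _ q hq]
  have h3 : ∀ k l : Fin n, Chr g k j l p = Chr g k l j p := fun k l => Chr_comm hΩ hsymm k j l hp
  rw [hatRic, h2]
  simp only [Fin.sum_univ_succ, h1, hChr _ _ _ p hp, hatChr_succ_zero_succ,
    hatChr_succ_succ_zero, Finset.sum_add_distrib, h3, Ric, ricRest, mul_add, Finset.mul_sum]
  simp only [pdx, pd, dir, Fin.cases_succ]
  ring

lemma pd_zero_potential {N : ℕ} {p : E n} (hp : 0 < p.2) :
    pd 0 (fun q : E n => (N : ℝ) / (2 * q.2)) p = -((N : ℝ) / (2 * p.2 ^ 2)) := by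
  refine pd_time_zero (φ := fun t => (N : ℝ) / (2 * t)) ?_
  have h := ((hasDerivAt_inv hp.ne').const_mul ((N : ℝ) / 2))
  have e : (fun t : ℝ => (N : ℝ) / (2 * t)) = fun t => (N : ℝ) / 2 * t⁻¹ := by
    ext t
    ring
  rw [e]
  exact h.congr_deriv (by field_simp)

lemma hatHess_succ_succ (N : ℕ) (i j : Fin n) {p : E n} (hp : 0 < p.2) :
    hatHess g N (fun q => (N : ℝ) / (2 * q.2)) i.succ j.succ p
      = (N : ℝ) / (2 * p.2 ^ 2) * ((hatg g N 0 0 p)⁻¹ * accel g i j p) := by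
  have h : ∀ k : Fin n, pd k.succ (fun q : E n => (N : ℝ) / (2 * q.2)) = fun _ => 0 := fun k => by
    ext q
    exact pd_time (fun t => (N : ℝ) / (2 * t)) k q
  simp only [hatHess, Fin.sum_univ_succ, h, pd_zero, pd_zero_potential hp, hatChr_zero_succ_succ]
  simp

lemma accel_eq (hΩ : IsOpen Ω) (hτ : ∀ p ∈ Ω, 0 < p.2)
    (hg : ∀ i j, SmoothOn Ω fun p => g p i j)
    (hflow : ∀ p ∈ Ω, ∀ j k : Fin n, pdt (fun q => g q j k) p = 2 * Ric g j k p)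
    (i j : Fin n) {p : E n} (hp : p ∈ Ω) :
    Ric g i j p - (1 / 2) * (g p i j / p.2) = -(p.2 * accel g i j p) := by
  have h0 := (hτ p hp).ne'
  have h1 : pd 0 (fun q => g q i j) p = 2 * Ric g i j p := hflow p hp i j
  have h2 : pd 0 (fun q : E n => (q.2)⁻¹) p = -(p.2 ^ 2)⁻¹ :=
    pd_time_zero (φ := fun t => t⁻¹) (hasDerivAt_inv h0)
  simp only [accel, div_eq_mul_inv]
  rw [pd_mul ((hg i j).differentiableAt hΩ hp)
    ((smoothOn_inv_time hτ).differentiableAt hΩ hp), h1, h2]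
  field_simp
  ring

/-- The soliton defect. The terms of order `N⁰`, namely
`R_{ij} − g_{ij}/(2τ)` and `N/(2τ²) Γ̂⁰_{ij}`, combine into `−τ ĝ₀₀⁻¹ (R/τ − n/(2τ²))` times
`-½ ∂_τ (g_{ij}/τ)`. -/
lemma defect_eq (hΩ : IsOpen Ω) (hτ : ∀ p ∈ Ω, 0 < p.2)
    (hg : ∀ i j, SmoothOn Ω fun p => g p i j) (hdet : ∀ p ∈ Ω, (g p).det ≠ 0)
    (hflow : ∀ p ∈ Ω, ∀ j k : Fin n, pdt (fun q => g q j k) p = 2 * Ric g j k p) (N : ℕ)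
    (hsymm : ∀ p ∈ Ω, (g p).IsSymm)
    (hN : ∀ p ∈ Ω, hatg g N 0 0 p ≠ 0) (i j : Fin n) {p : E n} (hp : p ∈ Ω) :
    hatRic g N i.succ j.succ p + hatHess g N (fun q => (N : ℝ) / (2 * q.2)) i.succ j.succ p
        - (1 / 2) * hatg g N i.succ j.succ p
      = ricRest g N i j p - (hatg g N 0 0 p)⁻¹ * (p.2 * accel g i j p * corr g p) := by
  have h0 := (hτ p hp).ne'
  have hh := hN p hp
  have hA := accel_eq hΩ hτ hg hflow i j hp
  rw [hatRic_succ_succ hΩ hτ hg hdet N hsymm hN i j hp, hatHess_succ_succ N i j (hτ p hp)]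
  have hR : Ric g i j p = -(p.2 * accel g i j p) + (1 / 2) * (g p i j / p.2) := by linarith
  rw [hR, hatg_succ_succ]
  have hc : corr g p = hatg g N 0 0 p - (N : ℝ) / (2 * p.2 ^ 3) := by
    simp only [hatg_zero_zero, lead]
    ring
  rw [hc]
  field_simp
  ring

end Formulas

/-! ### Asymptotics as `N → ∞`, uniformly on a compact set -/

section Estimates

variable {n : ℕ} {Ω : Set (E n)} {g : E n → Matrix (Fin n) (Fin n) ℝ} {K : Set (E n)}

/-- Pairs `(N, p)` with `N → ∞`, uniformly in `p ∈ K`. -/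
abbrev unif (K : Set (E n)) : Filter (ℕ × E n) := atTop ×ˢ 𝓟 K

lemma eventually_unif_mem (K : Set (E n)) : ∀ᶠ x in unif K, x.2 ∈ K :=
  (eventually_principal.2 fun _ h => h).prod_inr _

lemma isBigO_one (hK : IsCompact K) (hKΩ : K ⊆ Ω) {f : E n → ℝ} (hf : SmoothOn Ω f) :
    (fun x : ℕ × E n => f x.2) =O[unif K] fun _ => (1 : ℝ) := by
  obtain ⟨C, hC⟩ := hK.exists_bound_of_continuousOn (hf.continuousOn.mono hKΩ)
  refine IsBigO.of_bound C ?_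
  filter_upwards [eventually_unif_mem K] with x hx
  simpa using hC x.2 hx

/-- If `F = O(1/N)` and `f` is independent of `N`, then `F f = O(1/N)`. -/
lemma isBigO_mul_fixed (hK : IsCompact K) (hKΩ : K ⊆ Ω) {F : ℕ × E n → ℝ} {f : E n → ℝ}
    (hF : F =O[unif K] fun x => (x.1 : ℝ)⁻¹) (hf : SmoothOn Ω f) :
    (fun x => F x * f x.2) =O[unif K] fun x => (x.1 : ℝ)⁻¹ := by
  simpa using hF.mul (isBigO_one hK hKΩ hf)

lemma isBigO_inv_hatg (hΩ : IsOpen Ω) (hτ : ∀ p ∈ Ω, 0 < p.2)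
    (hg : ∀ i j, SmoothOn Ω fun p => g p i j) (hdet : ∀ p ∈ Ω, (g p).det ≠ 0)
    (hK : IsCompact K) (hKΩ : K ⊆ Ω) {b : ℝ} (hb : ∀ p ∈ Ω, p.2 < b) :
    (fun x : ℕ × E n => (hatg g x.1 0 0 x.2)⁻¹) =O[unif K] fun x => (x.1 : ℝ)⁻¹ := by
  obtain ⟨C, hC⟩ := hK.exists_bound_of_continuousOn
    ((smoothOn_corr hΩ hτ hg hdet).continuousOn.mono hKΩ)
  obtain ⟨M, hM⟩ := exists_nat_gt (4 * b ^ 3 * C)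
  refine IsBigO.of_bound (4 * b ^ 3) ?_
  have hev : ∀ᶠ x in unif K, max M 1 ≤ x.1 := (eventually_ge_atTop (max M 1)).prod_inl _
  filter_upwards [eventually_unif_mem K, hev] with x hx hMx
  have hp := hKΩ hx
  have h0 := hτ _ hp
  have hb0 : 0 < b := h0.trans (hb _ hp)
  have hM1 : (M : ℝ) ≤ x.1 := by exact_mod_cast (le_max_left _ _).trans hMx
  have hN1 : (1 : ℝ) ≤ x.1 := by exact_mod_cast (le_max_right _ _).trans hMx
  have hN0 : (0 : ℝ) < x.1 := by linarith
  -- `N/(2τ³) ≥ N/(2b³)`, and half of the latter absorbs the bounded part of `ĝ₀₀`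
  have hl : (x.1 : ℝ) * (2 * b ^ 3)⁻¹ ≤ x.1 * lead x.2 := by
    rw [lead]
    have := (hb _ hp).le
    gcongr
  have hc : -C ≤ corr g x.2 := (abs_le.1 (hC _ hx)).1
  have hC' : C ≤ (x.1 : ℝ) * (4 * b ^ 3)⁻¹ := by
    rw [← div_eq_mul_inv, le_div_iff₀ (by positivity)]
    linarith
  have hh : (x.1 : ℝ) * (4 * b ^ 3)⁻¹ ≤ hatg g x.1 0 0 x.2 := by
    rw [hatg_zero_zero]
    have : (x.1 : ℝ) * (2 * b ^ 3)⁻¹ = x.1 * (4 * b ^ 3)⁻¹ + x.1 * (4 * b ^ 3)⁻¹ := by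
      field_simp
      norm_num
    simp only
    linarith
  have hpos : 0 < (x.1 : ℝ) * (4 * b ^ 3)⁻¹ := by positivity
  rw [norm_inv, norm_inv, Real.norm_of_nonneg (hpos.trans_le hh).le,
    Real.norm_of_nonneg hN0.le]
  calc (hatg g x.1 0 0 x.2)⁻¹ ≤ ((x.1 : ℝ) * (4 * b ^ 3)⁻¹)⁻¹ := inv_anti₀ hpos hh
    _ = 4 * b ^ 3 * (x.1 : ℝ)⁻¹ := by rw [mul_inv, inv_inv, mul_comm]

/-- A derivative of `ĝ₀₀` can grow like `N`, but no faster, so its quotient by `ĝ₀₀` is bounded. -/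
lemma isBigO_inv_mul_pd_hatg (hΩ : IsOpen Ω) (hτ : ∀ p ∈ Ω, 0 < p.2)
    (hg : ∀ i j, SmoothOn Ω fun p => g p i j) (hdet : ∀ p ∈ Ω, (g p).det ≠ 0)
    (hK : IsCompact K) (hKΩ : K ⊆ Ω) {b : ℝ} (hb : ∀ p ∈ Ω, p.2 < b) (c : Fin (n + 1)) :
    (fun x : ℕ × E n => (hatg g x.1 0 0 x.2)⁻¹ * pd c (hatg g x.1 0 0) x.2)
      =O[unif K] fun _ => (1 : ℝ) := by
  have hev : ∀ᶠ x in unif K, 1 ≤ x.1 := (eventually_ge_atTop 1).prod_inl _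
  have h1N : (fun _ : ℕ × E n => (1 : ℝ)) =O[unif K] fun x => (x.1 : ℝ) := by
    refine IsBigO.of_bound 1 ?_
    filter_upwards [hev] with x hx
    have : (1 : ℝ) ≤ x.1 := by exact_mod_cast hx
    simpa using this
  have hpd : (fun x : ℕ × E n => pd c (hatg g x.1 0 0) x.2) =O[unif K] fun x => (x.1 : ℝ) := by
    have h : (fun x : ℕ × E n => (x.1 : ℝ) * pd c lead x.2 + pd c (corr g) x.2)
        =O[unif K] fun x => (x.1 : ℝ) := by
      refine IsBigO.add ?_ ?_
      · simpa using (isBigO_refl (fun x : ℕ × E n => (x.1 : ℝ)) (unif K)).mul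
          (isBigO_one hK hKΩ (SmoothOn.pd hΩ (smoothOn_lead hτ) c))
      · exact (isBigO_one hK hKΩ (SmoothOn.pd hΩ (smoothOn_corr hΩ hτ hg hdet) c)).trans h1N
    refine h.congr' ?_ EventuallyEq.rfl
    filter_upwards [eventually_unif_mem K] with x hx
    exact (pd_hatg_zero_zero hΩ hτ hg hdet x.1 c (hKΩ hx)).symm
  refine ((isBigO_inv_hatg hΩ hτ hg hdet hK hKΩ hb).mul hpd).congr' EventuallyEq.rfl ?_
  filter_upwards [hev] with x hx
  have : (x.1 : ℝ) ≠ 0 := by exact_mod_cast (by omega : x.1 ≠ 0)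
  exact inv_mul_cancel₀ this

/-- Derivatives of `ĝ₀₀⁻¹ f` are `O(1/N)`, for `f` independent of `N`. -/
lemma isBigO_pd_inv_mul (hΩ : IsOpen Ω) (hτ : ∀ p ∈ Ω, 0 < p.2)
    (hg : ∀ i j, SmoothOn Ω fun p => g p i j) (hdet : ∀ p ∈ Ω, (g p).det ≠ 0)
    (hK : IsCompact K) (hKΩ : K ⊆ Ω) {b : ℝ} (hb : ∀ p ∈ Ω, p.2 < b)
    (hN : ∀ᶠ N : ℕ in atTop, ∀ p ∈ Ω, hatg g N 0 0 p ≠ 0)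
    {f : E n → ℝ} (hf : SmoothOn Ω f) (c : Fin (n + 1)) :
    (fun x : ℕ × E n => pd c (fun q => (hatg g x.1 0 0 q)⁻¹ * f q) x.2)
      =O[unif K] fun x => (x.1 : ℝ)⁻¹ := by
  have hinv := isBigO_inv_hatg hΩ hτ hg hdet hK hKΩ hb
  have h1 := isBigO_mul_fixed hK hKΩ hinv (SmoothOn.pd hΩ hf c)
  have h2 := isBigO_mul_fixed hK hKΩ hinv hf
  have h3 := h2.mul (isBigO_inv_mul_pd_hatg hΩ hτ hg hdet hK hKΩ hb c)
  simp only [mul_one] at h3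
  refine (h1.sub h3).congr' ?_ EventuallyEq.rfl
  filter_upwards [eventually_unif_mem K, hN.prod_inl (𝓟 K)] with x hx hxN
  have hp := hKΩ hx
  have hd := (smoothOn_hatg_zero_zero hΩ hτ hg hdet x.1).differentiableAt hΩ hp
  rw [pd_mul (hd.fun_inv (hxN _ hp)) (hf.differentiableAt hΩ hp), pd_inv hd (hxN _ hp)]
  ring

lemma isBigO_ricRest (hΩ : IsOpen Ω) (hτ : ∀ p ∈ Ω, 0 < p.2)
    (hg : ∀ i j, SmoothOn Ω fun p => g p i j) (hdet : ∀ p ∈ Ω, (g p).det ≠ 0)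
    (hK : IsCompact K) (hKΩ : K ⊆ Ω) {b : ℝ} (hb : ∀ p ∈ Ω, p.2 < b)
    (hN : ∀ᶠ N : ℕ in atTop, ∀ p ∈ Ω, hatg g N 0 0 p ≠ 0) (i j : Fin n) :
    (fun x : ℕ × E n => ricRest g x.1 i j x.2) =O[unif K] fun x => (x.1 : ℝ)⁻¹ := by
  have hinv := isBigO_inv_hatg hΩ hτ hg hdet hK hKΩ hb
  have hcorr : ∀ i : Fin n, SmoothOn Ω fun q => (1 / 2) * pd i.succ (corr g) q := fun i =>
    contDiffOn_const.mul (SmoothOn.pd hΩ (smoothOn_corr hΩ hτ hg hdet) i.succ)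
  have h0ij : ∀ i j : Fin n, (fun x : ℕ × E n => hatChr g x.1 0 i.succ j.succ x.2)
      =O[unif K] fun x => (x.1 : ℝ)⁻¹ := fun i j => by
    simp only [hatChr_zero_succ_succ]
    exact isBigO_mul_fixed hK hKΩ hinv (smoothOn_accel hΩ hτ hg i j)
  have h0i0 : ∀ i : Fin n, (fun x : ℕ × E n => hatChr g x.1 0 i.succ 0 x.2)
      =O[unif K] fun x => (x.1 : ℝ)⁻¹ := fun i => by
    refine (isBigO_mul_fixed hK hKΩ hinv (hcorr i)).congr' ?_ EventuallyEq.rfl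
    filter_upwards [eventually_unif_mem K] with x hx
    exact (hatChr_zero_succ_zero_of_mem hΩ hτ hg hdet x.1 i (hKΩ hx)).symm
  have h000 : (fun x : ℕ × E n => hatChr g x.1 0 0 0 x.2) =O[unif K] fun _ => (1 : ℝ) := by
    refine ((isBigO_inv_mul_pd_hatg hΩ hτ hg hdet hK hKΩ hb 0).const_mul_left (1 / 2)).congr_left
      fun x => ?_
    rw [hatChr_zero_zero_zero]
    ring
  have hd0 : (fun x : ℕ × E n => pd 0 (hatChr g x.1 0 i.succ j.succ) x.2)
      =O[unif K] fun x => (x.1 : ℝ)⁻¹ := by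
    have : ∀ N, hatChr g N 0 i.succ j.succ = fun q => (hatg g N 0 0 q)⁻¹ * accel g i j q :=
      fun N => funext fun q => hatChr_zero_succ_succ N i j q
    simp only [this]
    exact isBigO_pd_inv_mul hΩ hτ hg hdet hK hKΩ hb hN (smoothOn_accel hΩ hτ hg i j) 0
  have hdj : (fun x : ℕ × E n => pd j.succ (hatChr g x.1 0 i.succ 0) x.2)
      =O[unif K] fun x => (x.1 : ℝ)⁻¹ := by
    refine (isBigO_pd_inv_mul hΩ hτ hg hdet hK hKΩ hb hN (hcorr i) j.succ).congr' ?_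
      EventuallyEq.rfl
    filter_upwards [eventually_unif_mem K] with x hx
    exact pd_congr hΩ (fun q hq => (hatChr_zero_succ_zero_of_mem hΩ hτ hg hdet x.1 i hq).symm)
      (hKΩ hx) _
  have hmix := smoothOn_mixed hΩ hτ hg hdet
  have hone : (fun x : ℕ × E n => (x.1 : ℝ)⁻¹) =O[unif K] fun _ => (1 : ℝ) := by
    refine IsBigO.of_bound 1 (Eventually.of_forall fun x => ?_)
    simpa using Nat.cast_inv_le_one (α := ℝ) x.1
  refine ((((hd0.sub hdj).add ?_).add ?_)).sub ((IsBigO.add ?_ ?_).add ?_)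
  · simpa using (h0ij i j).mul (h000.add
      (isBigO_one hK hKΩ (ContDiffOn.sum fun k (_ : k ∈ Finset.univ) => hmix k k)))
  · refine IsBigO.fun_sum fun k _ => ?_
    simpa using (isBigO_one hK hKΩ (smoothOn_Chr hΩ hg hdet k i j)).mul (h0i0 k)
  · simpa using (h0i0 i).mul ((h0i0 j).trans hone)
  · refine IsBigO.fun_sum fun l _ => ?_
    simpa using (isBigO_one hK hKΩ (hmix l i)).mul (h0ij j l)
  · exact IsBigO.fun_sum fun k _ => isBigO_mul_fixed hK hKΩ (h0ij i k) (hmix k j)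

end Estimates

/-- For `R` bounded and `0 < τ < b`, `ĝ₀₀ = (N + 2τ²R − nτ)/(2τ³)` is positive
everywhere once `N` is large. -/
lemma eventually_hatg_pos {n : ℕ} {Ω : Set (E n)} {g : E n → Matrix (Fin n) (Fin n) ℝ}
    (hτ : ∀ p ∈ Ω, 0 < p.2) {b : ℝ} (hb : ∀ p ∈ Ω, p.2 < b)
    (hR : ∃ C : ℝ, ∀ p ∈ Ω, |scal g p| ≤ C) :
    ∀ᶠ N : ℕ in atTop, ∀ p ∈ Ω, 0 < hatg g N 0 0 p := by
  obtain ⟨C, hC⟩ := hR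
  obtain ⟨M, hM⟩ := exists_nat_gt (2 * b ^ 2 * C + n * b)
  filter_upwards [eventually_ge_atTop M] with N hN p hp
  have h0 := hτ p hp
  have h1 := hb p hp
  have hMN : (M : ℝ) ≤ N := by exact_mod_cast hN
  have hC0 : 0 ≤ C := (abs_nonneg _).trans (hC p hp)
  have hR : -C ≤ scal g p := (abs_le.1 (hC p hp)).1
  have e : hatg g N 0 0 p = (N + 2 * p.2 ^ 2 * scal g p - n * p.2) / (2 * p.2 ^ 3) := by
    rw [hatg_zero_zero]
    simp only [lead, corr]
    field_simp
    ring
  rw [e]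
  have h2 : p.2 ^ 2 * C ≤ b ^ 2 * C := by gcongr
  have h3 : (n : ℝ) * p.2 ≤ n * b := by gcongr
  have h4 : p.2 ^ 2 * -C ≤ p.2 ^ 2 * scal g p := by gcongr
  refine div_pos ?_ (by positivity)
  linarith

end CanonicalSoliton

theorem stmt12 (n : ℕ) (U : Set (Fin n → ℝ)) (hU : IsOpen U)
    (a b : ℝ) (ha : 0 ≤ a) (hab : a < b)
    (g : E n → Matrix (Fin n) (Fin n) ℝ)
    (hsmooth : ∀ i j, ContDiffOn ℝ (⊤ : ℕ∞) (fun p => g p i j) (U ×ˢ Set.Ioo a b))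
    (hsymm : ∀ p ∈ U ×ˢ Set.Ioo a b, (g p).IsSymm)
    (hpos : ∀ p ∈ U ×ˢ Set.Ioo a b, (g p).PosDef)
    (hflow : ∀ p ∈ U ×ˢ Set.Ioo a b, ∀ j k : Fin n,
      pdt (fun q => g q j k) p = 2 * Ric g j k p)
    (hRbd : ∃ C : ℝ, ∀ p ∈ U ×ˢ Set.Ioo a b, |scal g p| ≤ C) :
    ∀ K : Set (E n), K ⊆ U ×ˢ Set.Ioo a b → IsCompact K →
      ∃ N₀ : ℕ, ∃ C : ℝ, 0 < C ∧ ∀ N : ℕ, N₀ ≤ N →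
        (∃ V : Set (E n), IsOpen V ∧ K ⊆ V ∧ V ⊆ U ×ˢ Set.Ioo a b ∧
          ∀ p ∈ V, 0 < hatg g N 0 0 p) ∧
        ∀ p ∈ K, ∀ i j : Fin n,
          |hatRic g N i.succ j.succ p + hatHess g N (fun q => (N : ℝ) / (2 * q.2)) i.succ j.succ p
            - (1 / 2) * hatg g N i.succ j.succ p| ≤ C / (N : ℝ) := by
  intro K hKΩ hK
  set Ω : Set (E n) := U ×ˢ Set.Ioo a b with hΩdef
  have hΩ : IsOpen Ω := hU.prod isOpen_Ioo
  have hτ : ∀ p ∈ Ω, 0 < p.2 := fun p hp => ha.trans_lt hp.2.1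
  have hb : ∀ p ∈ Ω, p.2 < b := fun p hp => hp.2.2
  have hdet : ∀ p ∈ Ω, (g p).det ≠ 0 := fun p hp => (hpos p hp).det_pos.ne'
  have hP := eventually_hatg_pos hτ hb hRbd
  have hN : ∀ᶠ N : ℕ in Filter.atTop, ∀ p ∈ Ω, hatg g N 0 0 p ≠ 0 :=
    hP.mono fun N h p hp => (h p hp).ne'
  have hO : ∀ i j : Fin n, (fun x : ℕ × E n => ricRest g x.1 i j x.2
      - (hatg g x.1 0 0 x.2)⁻¹ * (x.2.2 * accel g i j x.2 * corr g x.2))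
      =O[unif K] fun x => (x.1 : ℝ)⁻¹ := fun i j =>
    (isBigO_ricRest hΩ hτ hsmooth hdet hK hKΩ hb hN i j).sub
      (isBigO_mul_fixed hK hKΩ (isBigO_inv_hatg hΩ hτ hsmooth hdet hK hKΩ hb)
        ((contDiff_snd.contDiffOn.mul (smoothOn_accel hΩ hτ hsmooth i j)).mul
          (smoothOn_corr hΩ hτ hsmooth hdet)))
  choose C hC0 hC using fun i j => (hO i j).exists_pos
  have hev : ∀ᶠ N : ℕ in Filter.atTop, ∀ i j, ∀ p ∈ K, ‖ricRest g N i j p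
      - (hatg g N 0 0 p)⁻¹ * (p.2 * accel g i j p * corr g p)‖ ≤ C i j * ‖(N : ℝ)⁻¹‖ := by
    simp only [Filter.eventually_all]
    exact fun i j => Filter.eventually_prod_principal_iff.1 (hC i j).bound
  obtain ⟨N₀, hN₀⟩ := Filter.eventually_atTop.1 (hP.and hev)
  have hCle : ∀ i j, C i j ≤ 1 + ∑ k, ∑ l, C k l := fun i j => by
    have h1 : C i j ≤ ∑ l, C i l :=
      Finset.single_le_sum (f := fun l => C i l) (fun l _ => (hC0 i l).le) (Finset.mem_univ j)
    have h2 : ∑ l, C i l ≤ ∑ k, ∑ l, C k l :=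
      Finset.single_le_sum (f := fun k => ∑ l, C k l)
        (fun k _ => Finset.sum_nonneg fun l _ => (hC0 k l).le) (Finset.mem_univ i)
    linarith
  refine ⟨N₀, 1 + ∑ k, ∑ l, C k l, ?_, fun N hNN => ?_⟩
  · have : 0 ≤ ∑ k, ∑ l, C k l :=
      Finset.sum_nonneg fun k _ => Finset.sum_nonneg fun l _ => (hC0 k l).le
    linarith
  obtain ⟨hpN, hbN⟩ := hN₀ N hNN
  refine ⟨⟨Ω, hΩ, hKΩ, subset_rfl, hpN⟩, fun p hp i j => ?_⟩
  rw [defect_eq hΩ hτ hsmooth hdet hflow N hsymm (fun q hq => (hpN q hq).ne') i j (hKΩ hp)]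
  have h := hbN i j p hp
  rw [Real.norm_eq_abs, norm_inv, Real.norm_natCast] at h
  rw [div_eq_mul_inv]
  exact h.trans (by gcongr; exact hCle i j)
end
end

section
/- Canonical shrinking soliton equation, mixed components (Theorem 1.1): for every compact set K ⊆ U × (a,b) there exist N₀ ∈ ℕ and C > 0 such that for every integer N ≥ N₀ one has ĝ₀₀ > 0 on a neighbourhood of K, and at every point of K and for all i ∈ {1, …, n}: |R̂_{i0} + ∇̂²_{i0}(N/(2τ))| ≤ C/N, where N/(2τ) denotes the function (x,τ) ↦ N/(2τ) on Û (note ĝ_{i0} = 0, so this says the (i,0) soliton component vanishes to order 1/N). -/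
/-!
The mixed soliton component can be computed exactly. Write `f = ĝ₀₀` and `R_i = ∂_i R`. The
reverse Ricci flow gives
`Γ̂^k_{ij} = Γ^k_{ij}`, `Γ̂^k_{i0} = R^k_i - δ^k_i / (2τ)`, `Γ̂^k_{00} = -½ g^{kl} R_l`,
`Γ̂⁰_{ij} = -f⁻¹ (R_{ij}/τ - g_{ij}/(2τ²))` and `Γ̂⁰_{i0} = f⁻¹ R_i / (2τ)`.
In `R̂_{i0}` the terms `∂_τ Γ̂⁰_{i0}` and `Γ̂⁰_{i0} Γ̂⁰_{00}` cancel. Among the terms without a factor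
`f⁻¹`, those containing `1/τ` cancel as well, and what is left is
`∇_j R^j_i - ∂_τ Γ^j_{ij}`. The contracted Bianchi identity (`contracted_bianchi`) says
`∇_j R^j_i = ½ R_i`, and `∂_τ Γ^j_{ij} = R_i` because both sides equal `½ ∂_i ∂_τ log det g`
(`RevFlow.dt_Chr_trace`). So
`R̂_{i0} = -½ R_i + Γ̂⁰_{i0} (R - n/(2τ)) - Γ̂⁰_{ij} Γ̂^j_{00}`,
while the Hessian of `N/(2τ)` contributes `N/(2τ²) Γ̂⁰_{i0}`. Since
`½ f = N/(4τ³) + R/(2τ) - n/(4τ²)`, the sum is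
`f⁻¹ (R_i/(4τ²) - R_{ij} g^{jl} R_l/(2τ))` (`RevFlow.soliton_mixed`). The bracket does not depend
on `N` and is continuous, hence bounded on compact sets, and boundedness of `R` and `τ` makes
`f ≥ N / (4b³)` for large `N` (`hatg_zz_lower`).

The contracted Bianchi identity is obtained from matrix calculus: with connection matrices
`(A_i)^a_b = Γ^a_{ib}` and curvature `F_{ik} = ∂_i A_k - ∂_k A_i + [A_i, A_k]`, the identity
`d_A F = 0` and skewness of `F_{ik} g⁻¹` reduce the claim to a relabelling of indices
(`contraction_algebra`).
-/


noncomputable section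

open scoped BigOperators

open CanonicalSoliton

namespace CanonicalSoliton

/-! ### Directional derivatives of smooth scalar functions -/

section Calculus

variable {X : Type*} [NormedAddCommGroup X] [NormedSpace ℝ X]

/-- Directional derivative `∂_v f` of a scalar function; `pdx`, `pdt` and `pd` are instances. -/
def dd (v : X) (f : X → ℝ) (p : X) : ℝ := fderiv ℝ f p v

/-- Smoothness of a scalar function on a set. -/
def Sm (Ω : Set X) (f : X → ℝ) : Prop := ContDiffOn ℝ (⊤ : ℕ∞) f Ω

variable {Ω : Set X} {f f' : X → ℝ} {p v w : X}

lemma Sm.diffAt (hΩ : IsOpen Ω) (hf : Sm Ω f) (hp : p ∈ Ω) : DifferentiableAt ℝ f p :=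
  ((hf p hp).contDiffAt (hΩ.mem_nhds hp)).differentiableAt (by simp)

lemma Sm.add (hf : Sm Ω f) (hf' : Sm Ω f') : Sm Ω (fun q => f q + f' q) := ContDiffOn.add hf hf'
lemma Sm.sub (hf : Sm Ω f) (hf' : Sm Ω f') : Sm Ω (fun q => f q - f' q) := ContDiffOn.sub hf hf'
lemma Sm.neg (hf : Sm Ω f) : Sm Ω (fun q => - f q) := ContDiffOn.neg hf
lemma Sm.mul (hf : Sm Ω f) (hf' : Sm Ω f') : Sm Ω (fun q => f q * f' q) := ContDiffOn.mul hf hf'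
lemma Sm.const (c : ℝ) : Sm Ω (fun _ => c) := contDiffOn_const
lemma Sm.sum {ι : Type*} {s : Finset ι} {F : ι → X → ℝ} (h : ∀ i, Sm Ω (F i)) :
    Sm Ω (fun q => ∑ i ∈ s, F i q) := ContDiffOn.sum fun i _ => h i
lemma Sm.prod {ι : Type*} {s : Finset ι} {F : ι → X → ℝ} (h : ∀ i, Sm Ω (F i)) :
    Sm Ω (fun q => ∏ i ∈ s, F i q) := contDiffOn_prod fun i _ => h i
lemma Sm.inv (hf : Sm Ω f) (h0 : ∀ q ∈ Ω, f q ≠ 0) : Sm Ω (fun q => (f q)⁻¹) :=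
  ContDiffOn.inv hf h0
lemma Sm.congr (hf : Sm Ω f) (h : ∀ q ∈ Ω, f' q = f q) : Sm Ω f' := ContDiffOn.congr hf h

lemma Sm.fderiv (hΩ : IsOpen Ω) (hf : Sm Ω f) : ContDiffOn ℝ (⊤ : ℕ∞) (fderiv ℝ f) Ω :=
  ContDiffOn.fderiv_of_isOpen hf hΩ (by simp)

lemma Sm.dd (hΩ : IsOpen Ω) (hf : Sm Ω f) (v : X) : Sm Ω (dd v f) :=
  (hf.fderiv hΩ).clm_apply contDiffOn_const

lemma dd_congr (hΩ : IsOpen Ω) (hp : p ∈ Ω) (h : ∀ q ∈ Ω, f q = f' q) : dd v f p = dd v f' p := by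
  have : f =ᶠ[nhds p] f' := Filter.eventually_of_mem (hΩ.mem_nhds hp) h
  simp only [dd, this.fderiv_eq]

lemma dd_const (c : ℝ) : dd v (fun _ : X => c) p = 0 := by simp [dd]

lemma dd_add (hΩ : IsOpen Ω) (hp : p ∈ Ω) (hf : Sm Ω f) (hf' : Sm Ω f') :
    dd v (fun q => f q + f' q) p = dd v f p + dd v f' p := by
  simp only [dd, fderiv_fun_add (hf.diffAt hΩ hp) (hf'.diffAt hΩ hp), add_apply]

lemma dd_sub (hΩ : IsOpen Ω) (hp : p ∈ Ω) (hf : Sm Ω f) (hf' : Sm Ω f') :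
    dd v (fun q => f q - f' q) p = dd v f p - dd v f' p := by
  simp only [dd, fderiv_fun_sub (hf.diffAt hΩ hp) (hf'.diffAt hΩ hp), sub_apply]

lemma dd_neg : dd v (fun q => - f q) p = - dd v f p := by
  simp [dd, fderiv_fun_neg]

lemma dd_mul (hΩ : IsOpen Ω) (hp : p ∈ Ω) (hf : Sm Ω f) (hf' : Sm Ω f') :
    dd v (fun q => f q * f' q) p = dd v f p * f' p + f p * dd v f' p := by
  simp only [dd, fderiv_fun_mul (hf.diffAt hΩ hp) (hf'.diffAt hΩ hp), add_apply, smul_apply,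
    smul_eq_mul]
  ring

lemma dd_inv (hΩ : IsOpen Ω) (hp : p ∈ Ω) (hf : Sm Ω f) (h0 : f p ≠ 0) :
    dd v (fun q => (f q)⁻¹) p = - (dd v f p / f p ^ 2) := by
  have h : HasFDerivAt (fun q => (f q)⁻¹) (-(f p ^ 2)⁻¹ • fderiv ℝ f p) p :=
    (hasDerivAt_inv h0).comp_hasFDerivAt p (hf.diffAt hΩ hp).hasFDerivAt
  simp only [dd, h.fderiv, smul_apply, smul_eq_mul]
  ring

lemma dd_sum (hΩ : IsOpen Ω) (hp : p ∈ Ω) {ι : Type*} {s : Finset ι} {F : ι → X → ℝ}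
    (h : ∀ i, Sm Ω (F i)) : dd v (fun q => ∑ i ∈ s, F i q) p = ∑ i ∈ s, dd v (F i) p := by
  simp only [dd, fderiv_fun_sum fun i _ => (h i).diffAt hΩ hp, FunLike.coe_sum, Finset.sum_apply]

lemma dd_comm (hΩ : IsOpen Ω) (hp : p ∈ Ω) (hf : Sm Ω f) :
    dd v (dd w f) p = dd w (dd v f) p := by
  have hs : IsSymmSndFDerivAt ℝ f p :=
    ((hf p hp).contDiffAt (hΩ.mem_nhds hp)).isSymmSndFDerivAt
      (by rw [minSmoothness_of_isRCLikeNormedField]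
          exact WithTop.coe_le_coe.2 (le_top (a := (2 : ℕ∞))))
  have hd : DifferentiableAt ℝ (fderiv ℝ f) p :=
    ((hf.fderiv hΩ p hp).contDiffAt (hΩ.mem_nhds hp)).differentiableAt (by simp)
  have key : ∀ v w : X, dd v (dd w f) p = fderiv ℝ (fderiv ℝ f) p v w := by
    intro v w
    change fderiv ℝ (fun q => (fderiv ℝ f q) w) p v = _
    rw [fderiv_clm_apply hd (differentiableAt_const w)]
    simp
  rw [key, key, hs v w]

end Calculus

/-! ### Entrywise calculus of matrix fields -/

section MatrixCalculus

variable {X : Type*} [NormedAddCommGroup X] [NormedSpace ℝ X] {n : ℕ}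

/-- Entrywise directional derivative of a matrix field. -/
def mD (v : X) (M : X → Matrix (Fin n) (Fin n) ℝ) (p : X) : Matrix (Fin n) (Fin n) ℝ :=
  fun i j => dd v (fun q => M q i j) p

/-- Entrywise smoothness of a matrix field on a set. -/
def MSm (Ω : Set X) (M : X → Matrix (Fin n) (Fin n) ℝ) : Prop := ∀ i j, Sm Ω (fun q => M q i j)

variable {Ω : Set X} {M M' : X → Matrix (Fin n) (Fin n) ℝ} {p v w : X}

lemma MSm.add (h : MSm Ω M) (h' : MSm Ω M') : MSm Ω (fun q => M q + M' q) :=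
  fun i j => (h i j).add (h' i j)
lemma MSm.sub (h : MSm Ω M) (h' : MSm Ω M') : MSm Ω (fun q => M q - M' q) :=
  fun i j => (h i j).sub (h' i j)
lemma MSm.mul (h : MSm Ω M) (h' : MSm Ω M') : MSm Ω (fun q => M q * M' q) :=
  fun i j => by
    simp only [Matrix.mul_apply]
    exact Sm.sum fun k => (h i k).mul (h' k j)
lemma MSm.transpose (h : MSm Ω M) : MSm Ω (fun q => (M q).transpose) := fun i j => h j i
lemma MSm.mD (hΩ : IsOpen Ω) (h : MSm Ω M) (v : X) : MSm Ω (mD v M) := fun i j => (h i j).dd hΩ v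

lemma MSm.det (h : MSm Ω M) : Sm Ω (fun q => (M q).det) := by
  simp only [Matrix.det_apply']
  exact Sm.sum fun σ => (Sm.const _).mul (Sm.prod fun i => h _ _)

lemma MSm.inv (h : MSm Ω M) (h0 : ∀ q ∈ Ω, (M q).det ≠ 0) : MSm Ω (fun q => (M q)⁻¹) := by
  intro i j
  have hadj : Sm Ω (fun q => (M q).adjugate i j) := by
    simp only [Matrix.adjugate_apply]
    refine MSm.det (M := fun q => (M q).updateRow j (Pi.single i 1)) fun k l => ?_
    simp only [Matrix.updateRow_apply]
    split_ifs
    · exact Sm.const _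
    · exact h k l
  simp only [Matrix.inv_def, Matrix.smul_apply, smul_eq_mul, Ring.inverse_eq_inv']
  exact (h.det.inv h0).mul hadj

lemma mD_congr (hΩ : IsOpen Ω) (hp : p ∈ Ω) (h : ∀ q ∈ Ω, M q = M' q) : mD v M p = mD v M' p := by
  ext i j
  exact dd_congr hΩ hp fun q hq => by rw [h q hq]

lemma mD_const (C : Matrix (Fin n) (Fin n) ℝ) : mD v (fun _ : X => C) p = 0 := by
  ext i j
  exact dd_const _

lemma mD_add (hΩ : IsOpen Ω) (hp : p ∈ Ω) (h : MSm Ω M) (h' : MSm Ω M') :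
    mD v (fun q => M q + M' q) p = mD v M p + mD v M' p := by
  ext i j
  exact dd_add hΩ hp (h i j) (h' i j)

lemma mD_sub (hΩ : IsOpen Ω) (hp : p ∈ Ω) (h : MSm Ω M) (h' : MSm Ω M') :
    mD v (fun q => M q - M' q) p = mD v M p - mD v M' p := by
  ext i j
  exact dd_sub hΩ hp (h i j) (h' i j)

lemma mD_neg : mD v (fun q => - M q) p = - mD v M p := by
  ext i j
  exact dd_neg

lemma mD_transpose : mD v (fun q => (M q).transpose) p = (mD v M p).transpose := rfl

lemma mD_mul (hΩ : IsOpen Ω) (hp : p ∈ Ω) (h : MSm Ω M) (h' : MSm Ω M') :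
    mD v (fun q => M q * M' q) p = mD v M p * M' p + M p * mD v M' p := by
  ext i j
  simp only [mD, Matrix.mul_apply, Matrix.add_apply]
  rw [dd_sum hΩ hp fun k => (h i k).mul (h' k j), ← Finset.sum_add_distrib]
  exact Finset.sum_congr rfl fun k _ => dd_mul hΩ hp (h i k) (h' k j)

lemma mD_comm (hΩ : IsOpen Ω) (hp : p ∈ Ω) (h : MSm Ω M) :
    mD v (mD w M) p = mD w (mD v M) p := by
  ext i j
  exact dd_comm hΩ hp (h i j)

lemma dd_trace (hΩ : IsOpen Ω) (hp : p ∈ Ω) (h : MSm Ω M) :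
    dd v (fun q => (M q).trace) p = (mD v M p).trace :=
  dd_sum hΩ hp fun i => h i i

lemma MSm.trace (h : MSm Ω M) : Sm Ω (fun q => (M q).trace) := Sm.sum fun i => h i i

end MatrixCalculus

/-! ### Curvature of a connection and the contracted Bianchi identity -/

section Bianchi

variable {X : Type*} [NormedAddCommGroup X] [NormedSpace ℝ X] {n : ℕ}

/-- Curvature matrices `F_{ik} = ∂_i A_k - ∂_k A_i + [A_i, A_k]` of a connection with matrices
`(A_i)^a_b = Γ^a_{ib}`. -/
def curv (e : Fin n → X) (A : Fin n → X → Matrix (Fin n) (Fin n) ℝ) (i k : Fin n) (q : X) :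
    Matrix (Fin n) (Fin n) ℝ :=
  mD (e i) (A k) q - mD (e k) (A i) q + A i q * A k q - A k q * A i q

variable {Ω : Set X} {e : Fin n → X} {A : Fin n → X → Matrix (Fin n) (Fin n) ℝ}
  {h : X → Matrix (Fin n) (Fin n) ℝ} {p : X}

lemma curv_smooth (hΩ : IsOpen Ω) (hA : ∀ i, MSm Ω (A i)) (i k : Fin n) :
    MSm Ω (curv e A i k) :=
  ((((hA k).mD hΩ _).sub ((hA i).mD hΩ _)).add ((hA i).mul (hA k))).sub ((hA k).mul (hA i))

lemma curv_antisymm (i k : Fin n) (q : X) : curv e A k i q = - curv e A i k q := by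
  simp only [curv]; abel

lemma mD_curv (hΩ : IsOpen Ω) (hA : ∀ i, MSm Ω (A i)) (hp : p ∈ Ω) (v : X) (i k : Fin n) :
    mD v (curv e A i k) p = mD v (mD (e i) (A k)) p - mD v (mD (e k) (A i)) p
      + (mD v (A i) p * A k p + A i p * mD v (A k) p)
      - (mD v (A k) p * A i p + A k p * mD v (A i) p) := by
  have h1 := (hA k).mD hΩ (e i)
  have h2 := (hA i).mD hΩ (e k)
  rw [← mD_mul hΩ hp (hA i) (hA k), ← mD_mul hΩ hp (hA k) (hA i), ← mD_sub hΩ hp h1 h2,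
    ← mD_add hΩ hp (h1.sub h2) ((hA i).mul (hA k)),
    ← mD_sub hΩ hp ((h1.sub h2).add ((hA i).mul (hA k))) ((hA k).mul (hA i))]
  rfl

/-- The differential Bianchi identity `d_A F = 0`. -/
lemma second_bianchi (hΩ : IsOpen Ω) (hA : ∀ i, MSm Ω (A i)) (hp : p ∈ Ω) (m i k : Fin n) :
    (mD (e m) (curv e A i k) p + A m p * curv e A i k p - curv e A i k p * A m p)
    + (mD (e i) (curv e A k m) p + A i p * curv e A k m p - curv e A k m p * A i p)
    + (mD (e k) (curv e A m i) p + A k p * curv e A m i p - curv e A m i p * A k p) = 0 := by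
  rw [mD_curv hΩ hA hp, mD_curv hΩ hA hp, mD_curv hΩ hA hp,
    mD_comm hΩ hp (hA k) (v := e m) (w := e i), mD_comm hΩ hp (hA m) (v := e i) (w := e k),
    mD_comm hΩ hp (hA i) (v := e k) (w := e m)]
  simp only [curv]
  noncomm_ring

/-- For a metric connection, the curvature with its endomorphism index raised is skew. -/
lemma curv_skew (hΩ : IsOpen Ω) (hA : ∀ i, MSm Ω (A i)) (hh : MSm Ω h)
    (hcompat : ∀ i, ∀ q ∈ Ω, mD (e i) h q = - (A i q * h q + h q * (A i q).transpose))
    (hp : p ∈ Ω) (i k : Fin n) :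
    curv e A i k p * h p + h p * (curv e A i k p).transpose = 0 := by
  have key : ∀ i k, mD (e i) (mD (e k) h) p
      = - ((mD (e i) (A k) p * h p + A k p * mD (e i) h p)
          + (mD (e i) h p * (A k p).transpose + h p * (mD (e i) (A k) p).transpose)) := by
    intro i k
    rw [mD_congr hΩ hp (hcompat k), mD_neg,
      mD_add hΩ hp ((hA k).mul hh) (hh.mul (hA k).transpose), mD_mul hΩ hp (hA k) hh,
      mD_mul hΩ hp hh (hA k).transpose, mD_transpose]
  have h0 := mD_comm hΩ hp hh (v := e i) (w := e k)
  rw [key, key, hcompat i p hp, hcompat k p hp, ← sub_eq_zero] at h0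
  rw [← neg_eq_zero, ← h0]
  simp only [curv, Matrix.transpose_add, Matrix.transpose_sub, Matrix.transpose_mul]
  noncomm_ring

/-- The index bookkeeping behind the contracted Bianchi identity: `P i k` are the curvature matrices
with both matrix indices up, `dP m i k` their derivatives, and `Q^l_i = ∑ k, (P_{ki})^{kl}` is the
Ricci tensor with one index raised. -/
lemma contraction_algebra (A : Fin n → Matrix (Fin n) (Fin n) ℝ)
    (P : Fin n → Fin n → Matrix (Fin n) (Fin n) ℝ)
    (dP : Fin n → Fin n → Fin n → Matrix (Fin n) (Fin n) ℝ)
    (htors : ∀ i j k, A i k j = A j k i)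
    (hP1 : ∀ i k a b, P i k a b = - P i k b a) (hP2 : ∀ i k a b, P i k a b = - P k i a b)
    (hd1 : ∀ m i k a b, dP m i k a b = - dP m i k b a)
    (hd2 : ∀ m i k a b, dP m i k a b = - dP m k i a b)
    (hB : ∀ m i k, (dP m i k + A m * P i k + P i k * (A m).transpose)
      + (dP i k m + A i * P k m + P k m * (A i).transpose)
      + (dP k m i + A k * P m i + P m i * (A k).transpose) = 0) (m : Fin n) :
    (∑ i, ∑ k, dP m i k i k) + 2 * ∑ i, ∑ l, A m i l * ∑ k, P k i k l
      = 2 * (∑ i, ∑ k, dP i k m k i) + 2 * ∑ i, ∑ l, A i i l * ∑ k, P k m k l := by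
  have hsum : ∑ i, ∑ k,
      ((dP m i k i k + (∑ l, A m i l * P i k l k) + (∑ l, P i k i l * A m k l))
      + (dP i k m i k + (∑ l, A i i l * P k m l k) + (∑ l, P k m i l * A i k l))
      + (dP k m i i k + (∑ l, A k i l * P m i l k) + (∑ l, P m i i l * A k k l))) = 0 := by
    refine Finset.sum_eq_zero fun i _ => Finset.sum_eq_zero fun k _ => ?_
    have := congrFun (congrFun (hB m i k) i) k
    simpa only [Matrix.add_apply, Matrix.mul_apply, Matrix.transpose_apply, Matrix.zero_apply]
      using this
  simp only [Finset.sum_add_distrib] at hsum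
  have a1 : ∑ i, ∑ k, ∑ l, A m i l * P i k l k = ∑ i, ∑ l, A m i l * ∑ k, P k i k l := by
    refine Finset.sum_congr rfl fun i _ => ?_
    rw [Finset.sum_comm]
    refine Finset.sum_congr rfl fun l _ => ?_
    rw [Finset.mul_sum]
    refine Finset.sum_congr rfl fun k _ => ?_
    rw [hP1, hP2]; ring
  have a2 : ∑ i, ∑ k, ∑ l, P i k i l * A m k l = ∑ i, ∑ l, A m i l * ∑ k, P k i k l := by
    rw [Finset.sum_comm]
    refine Finset.sum_congr rfl fun i _ => ?_
    rw [Finset.sum_comm]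
    refine Finset.sum_congr rfl fun l _ => ?_
    rw [Finset.mul_sum]
    exact Finset.sum_congr rfl fun k _ => mul_comm _ _
  have b0 : ∑ i, ∑ k, dP i k m i k = - ∑ i, ∑ k, dP i k m k i := by
    simp only [← Finset.sum_neg_distrib]
    exact Finset.sum_congr rfl fun i _ => Finset.sum_congr rfl fun k _ => hd1 _ _ _ _ _
  have b1 : ∑ i, ∑ k, ∑ l, A i i l * P k m l k = - ∑ i, ∑ l, A i i l * ∑ k, P k m k l := by
    simp only [← Finset.sum_neg_distrib]
    refine Finset.sum_congr rfl fun i _ => ?_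
    rw [Finset.sum_comm]
    refine Finset.sum_congr rfl fun l _ => ?_
    rw [Finset.mul_sum, ← Finset.sum_neg_distrib]
    refine Finset.sum_congr rfl fun k _ => ?_
    rw [hP1]; ring
  -- a skew matrix paired with the symmetric lower indices of the Christoffel symbol
  have b2 : ∑ i, ∑ k, ∑ l, P k m i l * A i k l = 0 := by
    rw [Finset.sum_comm]
    refine Finset.sum_eq_zero fun k _ => ?_
    have h : ∑ i, ∑ l, P k m i l * A i k l = - ∑ i, ∑ l, P k m i l * A i k l := by
      conv_lhs => rw [Finset.sum_comm]
      simp only [← Finset.sum_neg_distrib]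
      refine Finset.sum_congr rfl fun i _ => Finset.sum_congr rfl fun l _ => ?_
      rw [hP1, htors]; ring
    linarith
  have c0 : ∑ i, ∑ k, dP k m i i k = - ∑ i, ∑ k, dP i k m k i := by
    rw [Finset.sum_comm]
    simp only [← Finset.sum_neg_distrib]
    exact Finset.sum_congr rfl fun i _ => Finset.sum_congr rfl fun k _ => hd2 _ _ _ _ _
  have c1 : ∑ i, ∑ k, ∑ l, A k i l * P m i l k = 0 := by
    rw [Finset.sum_comm, ← b2]
    refine Finset.sum_congr rfl fun i _ => Finset.sum_congr rfl fun k _ =>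
      Finset.sum_congr rfl fun l _ => ?_
    rw [hP1, hP2]; ring
  have c2 : ∑ i, ∑ k, ∑ l, P m i i l * A k k l = - ∑ i, ∑ l, A i i l * ∑ k, P k m k l := by
    rw [Finset.sum_comm]
    simp only [← Finset.sum_neg_distrib]
    refine Finset.sum_congr rfl fun i _ => ?_
    rw [Finset.sum_comm]
    refine Finset.sum_congr rfl fun l _ => ?_
    rw [Finset.mul_sum, ← Finset.sum_neg_distrib]
    refine Finset.sum_congr rfl fun k _ => ?_
    rw [hP2]; ring
  rw [a1, a2, b0, b1, b2, c0, c1, c2] at hsum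
  linarith

/-- The contracted second Bianchi identity `∇_j R^j_m = ½ ∂_m R` for a torsion-free metric
connection, in coordinates. Here `∑ i, (F_{ik})^i_j` is the Ricci tensor `R_{jk}`. -/
lemma contracted_bianchi (hΩ : IsOpen Ω) (hA : ∀ i, MSm Ω (A i)) (hh : MSm Ω h)
    (hsym : ∀ q ∈ Ω, (h q).transpose = h q)
    (hcompat : ∀ i, ∀ q ∈ Ω, mD (e i) h q = - (A i q * h q + h q * (A i q).transpose))
    (htors : ∀ q ∈ Ω, ∀ i j k, A i q k j = A j q k i)
    (Ric : Fin n → Fin n → X → ℝ)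
    (hRic : ∀ q ∈ Ω, ∀ j k, Ric j k q = ∑ i, curv e A i k q i j)
    (hp : p ∈ Ω) (m : Fin n) :
    (∑ j, dd (e j) (fun q => ∑ k, h q j k * Ric k m q) p)
      + (∑ j, ∑ k, A j p k k * (∑ l, h p j l * Ric l m p))
      - (∑ j, ∑ k, A m p k j * (∑ l, h p j l * Ric l k p))
      = (1 / 2) * dd (e m) (fun q => ∑ j, ∑ k, h q j k * Ric j k q) p := by
  set P : Fin n → Fin n → X → Matrix (Fin n) (Fin n) ℝ :=
    fun i k q => curv e A i k q * h q with hPdef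
  have hF := curv_smooth (e := e) hΩ hA
  have hPs : ∀ i k, MSm Ω (P i k) := fun i k => (hF i k).mul hh
  have hP1 : ∀ q ∈ Ω, ∀ i k, P i k q = - (P i k q).transpose := by
    intro q hq i k
    have := curv_skew hΩ hA hh hcompat hq i k
    simp only [hPdef, Matrix.transpose_mul, hsym q hq]
    exact eq_neg_of_add_eq_zero_left this
  have hP2 : ∀ q i k, P i k q = - P k i q := by
    intro q i k
    simp only [hPdef, curv_antisymm (e := e) (A := A) k i q, neg_mul]
  have hB : ∀ m i k, (mD (e m) (P i k) p + A m p * P i k p + P i k p * (A m p).transpose)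
      + (mD (e i) (P k m) p + A i p * P k m p + P k m p * (A i p).transpose)
      + (mD (e k) (P m i) p + A k p * P m i p + P m i p * (A k p).transpose) = 0 := by
    intro m i k
    have h2 := congrArg (· * h p) (second_bianchi (e := e) hΩ hA hp m i k)
    simp only [zero_mul] at h2
    rw [← h2]
    simp only [hPdef]
    rw [mD_mul hΩ hp (hF i k) hh, mD_mul hΩ hp (hF k m) hh, mD_mul hΩ hp (hF m i) hh,
      hcompat m p hp, hcompat i p hp, hcompat k p hp]
    noncomm_ring
  have alg := contraction_algebra (fun i => A i p) (fun i k => P i k p)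
    (fun m i k => mD (e m) (P i k) p) (htors p hp)
    (fun i k a b => congrFun (congrFun (hP1 p hp i k) a) b)
    (fun i k a b => congrFun (congrFun (hP2 p i k) a) b)
    (fun m i k a b => by
      have : mD (e m) (P i k) p = - (mD (e m) (P i k) p).transpose := by
        conv_lhs => rw [mD_congr hΩ hp (fun q hq => hP1 q hq i k), mD_neg, mD_transpose]
      exact congrFun (congrFun this a) b)
    (fun m i k a b => by
      have : mD (e m) (P i k) p = - mD (e m) (P k i) p := by
        rw [mD_congr hΩ hp (fun q _ => hP2 q i k), mD_neg]
      exact congrFun (congrFun this a) b) hB m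
  have hQ : ∀ q ∈ Ω, ∀ l i, ∑ k, h q l k * Ric k i q = ∑ a, P a i q a l := by
    intro q hq l i
    simp only [hPdef, Matrix.mul_apply, hRic q hq, Finset.mul_sum]
    rw [Finset.sum_comm]
    refine Finset.sum_congr rfl fun a _ => Finset.sum_congr rfl fun k _ => ?_
    rw [← hsym q hq, Matrix.transpose_apply, hsym q hq, mul_comm]
  have hR : ∀ q ∈ Ω, ∑ j, ∑ k, h q j k * Ric j k q = ∑ i, ∑ k, P i k q i k := by
    intro q hq
    rw [Finset.sum_comm, Finset.sum_comm (f := fun i k => P i k q i k)]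
    refine Finset.sum_congr rfl fun k _ => ?_
    rw [← hQ q hq]
    refine Finset.sum_congr rfl fun j _ => ?_
    rw [← hsym q hq, Matrix.transpose_apply, hsym q hq]
  rw [dd_congr hΩ hp hR, dd_sum hΩ hp fun i => Sm.sum fun k => hPs i k i k]
  simp only [dd_sum hΩ hp fun k => hPs _ k _ k]
  have e1 : ∀ j, dd (e j) (fun q => ∑ k, h q j k * Ric k m q) p
      = ∑ k, mD (e j) (P k m) p k j := by
    intro j
    rw [dd_congr hΩ hp (fun q hq => hQ q hq j m), dd_sum hΩ hp fun k => hPs k m k j]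
    rfl
  simp only [e1, hQ p hp]
  have e2 : ∑ j, ∑ k, A j p k k * ∑ a, P a m p a j
      = ∑ i, ∑ l, A i p i l * ∑ k, P k m p k l := by
    rw [Finset.sum_comm]
    exact Finset.sum_congr rfl fun i _ => Finset.sum_congr rfl fun l _ => by rw [htors p hp]
  have e3 : ∑ j, ∑ k, A m p k j * ∑ a, P a k p a j
      = ∑ i, ∑ l, A m p i l * ∑ k, P k i p k l := Finset.sum_comm
  rw [e2, e3]
  have e4 : ∑ i, ∑ k, dd (e m) (fun q => P i k q i k) p
      = ∑ i, ∑ k, mD (e m) (P i k) p i k := rfl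
  rw [e4]
  linarith

end Bianchi

/-! ### The Levi-Civita connection along the reverse Ricci flow -/

section Flow

variable {n : ℕ}

/-- `g` is a smooth Riemannian solution of the reverse Ricci flow on the open space-time set `Ω`,
on which time is positive. -/
structure RevFlow (Ω : Set (E n)) (g : E n → Matrix (Fin n) (Fin n) ℝ) : Prop where
  isOpen : IsOpen Ω
  sm : MSm Ω g
  symm : ∀ q ∈ Ω, (g q).transpose = g q
  pos : ∀ q ∈ Ω, (g q).PosDef
  flow : ∀ q ∈ Ω, ∀ j k, pdt (fun q => g q j k) q = 2 * Ric g j k q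
  time : ∀ q ∈ Ω, 0 < q.2

/-- Connection matrices of the Levi-Civita connection, `(A_i)^k_j = Γ^k_{ij}`. -/
def conn (g : E n → Matrix (Fin n) (Fin n) ℝ) (i : Fin n) (q : E n) : Matrix (Fin n) (Fin n) ℝ :=
  fun k j => Chr g k i j q

/-- Christoffel symbols of the first kind, `C_{lj} = ½ (∂_i g_{jl} + ∂_j g_{il} - ∂_l g_{ij})`. -/
def chr1 (g : E n → Matrix (Fin n) (Fin n) ℝ) (i : Fin n) (q : E n) : Matrix (Fin n) (Fin n) ℝ :=
  fun l j => (1 / 2) * (pdx i (fun q => g q j l) q + pdx j (fun q => g q i l) q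
    - pdx l (fun q => g q i j) q)

/-- The spatial coordinate direction `∂/∂xⁱ`. -/
def ex (i : Fin n) : E n := (Pi.single i 1, 0)

/-- The time direction `∂/∂τ`. -/
def et : E n := (0, 1)

lemma conn_eq (g : E n → Matrix (Fin n) (Fin n) ℝ) (i : Fin n) (q : E n) :
    conn g i q = ginv g q * chr1 g i q := by
  ext k j
  simp only [conn, Chr, chr1, Matrix.mul_apply, Finset.mul_sum]
  exact Finset.sum_congr rfl fun l _ => by ring

namespace RevFlow

variable {Ω : Set (E n)} {g : E n → Matrix (Fin n) (Fin n) ℝ} {p q : E n} (H : RevFlow Ω g)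
include H

lemma isUnit_det (hq : q ∈ Ω) : IsUnit (g q).det := (H.pos q hq).det_pos.ne'.isUnit

lemma inv_mul (hq : q ∈ Ω) : ginv g q * g q = 1 := Matrix.nonsing_inv_mul _ (H.isUnit_det hq)

lemma mul_inv (hq : q ∈ Ω) : g q * ginv g q = 1 := Matrix.mul_nonsing_inv _ (H.isUnit_det hq)

lemma inv_smooth : MSm Ω (ginv g) := H.sm.inv fun _ hq => (H.isUnit_det hq).ne_zero

lemma inv_symm : ∀ q ∈ Ω, (ginv g q).transpose = ginv g q := fun q hq => by
  rw [ginv, Matrix.transpose_nonsing_inv, H.symm q hq]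

lemma inv_symm' (hq : q ∈ Ω) (i j : Fin n) : ginv g q i j = ginv g q j i :=
  congrFun (congrFun (H.inv_symm q hq) j) i

lemma g_symm' (hq : q ∈ Ω) (i j : Fin n) : g q i j = g q j i :=
  congrFun (congrFun (H.symm q hq) j) i

lemma dd_g_symm (hq : q ∈ Ω) (v : E n) (i j : Fin n) :
    dd v (fun q => g q i j) q = dd v (fun q => g q j i) q :=
  dd_congr H.isOpen hq fun _ hq => H.g_symm' hq i j

lemma mD_inv (hp : p ∈ Ω) (v : E n) : mD v (ginv g) p = - (ginv g p * mD v g p * ginv g p) := by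
  have h : mD v (ginv g) p * g p + ginv g p * mD v g p = 0 := by
    rw [← mD_mul H.isOpen hp H.inv_smooth H.sm, mD_congr H.isOpen hp fun _ hq => H.inv_mul hq,
      mD_const]
  have h2 := congrArg (· * ginv g p) h
  simp only [add_mul, zero_mul, Matrix.mul_assoc, H.mul_inv hp, Matrix.mul_one] at h2
  rw [Matrix.mul_assoc]
  exact eq_neg_of_add_eq_zero_left h2

lemma chr1_smooth (i : Fin n) : MSm Ω (chr1 g i) := fun l j =>
  (Sm.const _).mul ((((H.sm j l).dd H.isOpen (ex i)).add ((H.sm i l).dd H.isOpen (ex j))).sub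
    ((H.sm i j).dd H.isOpen (ex l)))

lemma conn_smooth (i : Fin n) : MSm Ω (conn g i) := by
  have : conn g i = fun q => ginv g q * chr1 g i q := funext (conn_eq g i)
  rw [this]
  exact H.inv_smooth.mul (H.chr1_smooth i)

lemma chr1_add (hq : q ∈ Ω) (i : Fin n) :
    chr1 g i q + (chr1 g i q).transpose = mD (ex i) g q := by
  ext l j
  have h1 := H.dd_g_symm hq (ex i) j l
  have h2 : chr1 g i q l j + chr1 g i q j l = (1 / 2) * (dd (ex i) (fun q => g q j l) q
      + dd (ex i) (fun q => g q l j) q) := by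
    simp only [chr1]
    change (1 / 2) * (dd (ex i) (fun q => g q j l) q + dd (ex j) (fun q => g q i l) q
      - dd (ex l) (fun q => g q i j) q) + (1 / 2) * (dd (ex i) (fun q => g q l j) q
      + dd (ex l) (fun q => g q i j) q - dd (ex j) (fun q => g q i l) q) = _
    ring
  simp only [Matrix.add_apply, Matrix.transpose_apply, h2, h1, mD]
  ring

/-- Metric compatibility of the Levi-Civita connection, written for the inverse metric. -/
lemma compat (i : Fin n) (q : E n) (hq : q ∈ Ω) :
    mD (ex i) (ginv g) q = - (conn g i q * ginv g q + ginv g q * (conn g i q).transpose) := by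
  rw [H.mD_inv hq, ← H.chr1_add hq, conn_eq, Matrix.transpose_mul, H.inv_symm q hq]
  noncomm_ring

lemma Chr_symm (hq : q ∈ Ω) (k i j : Fin n) : Chr g k i j q = Chr g k j i q := by
  simp only [Chr]
  congr 1
  refine Finset.sum_congr rfl fun l _ => ?_
  have : pdx l (fun q => g q i j) q = pdx l (fun q => g q j i) q := H.dd_g_symm hq (ex l) i j
  rw [this]; ring

/-- The coordinate Ricci tensor is the trace `∑ i, (F_{ik})^i_j` of the curvature matrices. -/
lemma Ric_eq_curv (q : E n) (hq : q ∈ Ω) (j k : Fin n) :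
    Ric g j k q = ∑ i, curv ex (conn g) i k q i j := by
  have h1 : ∀ i, pdx i (Chr g i j k) q = mD (ex i) (conn g k) q i j := fun i =>
    dd_congr H.isOpen hq fun q hq => H.Chr_symm hq i j k
  have h2 : pdx k (fun q => ∑ i, Chr g i j i q) q = ∑ i, mD (ex k) (conn g i) q i j := by
    refine (dd_sum H.isOpen hq (F := fun i => Chr g i j i) fun i => H.conn_smooth j i i).trans
      (Finset.sum_congr rfl fun i _ => ?_)
    exact dd_congr H.isOpen hq fun q hq => H.Chr_symm hq i j i
  have h3 : ∑ i, ∑ l, Chr g i j k q * Chr g l i l q = ∑ i, (conn g i q * conn g k q) i j := by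
    simp only [Matrix.mul_apply, conn]
    rw [Finset.sum_comm]
    refine Finset.sum_congr rfl fun i _ => Finset.sum_congr rfl fun l _ => ?_
    rw [H.Chr_symm hq l j k, H.Chr_symm hq i l i]; ring
  have h4 : ∑ i, ∑ l, Chr g l j i q * Chr g i l k q = ∑ i, (conn g k q * conn g i q) i j := by
    simp only [Matrix.mul_apply, conn]
    refine Finset.sum_congr rfl fun i _ => Finset.sum_congr rfl fun l _ => ?_
    rw [H.Chr_symm hq l j i, H.Chr_symm hq i l k]; ring
  simp only [Ric, h1, h2, h3, h4, curv, Matrix.add_apply, Matrix.sub_apply,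
    Finset.sum_add_distrib, Finset.sum_sub_distrib]

lemma Ric_smooth (j k : Fin n) : Sm Ω (Ric g j k) :=
  (Sm.sum fun i => curv_smooth (e := ex) H.isOpen H.conn_smooth i k i j).congr
    fun q hq => H.Ric_eq_curv q hq j k

/-- Along the flow, symmetry of the Ricci tensor is inherited from that of `∂_τ g`. -/
lemma Ric_symm (hq : q ∈ Ω) (j k : Fin n) : Ric g j k q = Ric g k j q := by
  have h : pdt (fun q => g q j k) q = pdt (fun q => g q k j) q := H.dd_g_symm hq et j k
  rw [H.flow q hq, H.flow q hq] at h
  linarith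

lemma scal_smooth : Sm Ω (scal g) :=
  Sm.sum fun j => Sm.sum fun k => (H.inv_smooth j k).mul (H.Ric_smooth j k)

lemma RicUp_smooth (i j : Fin n) : Sm Ω (RicUp g i j) :=
  Sm.sum fun k => (H.inv_smooth i k).mul (H.Ric_smooth k j)

lemma bianchi (hp : p ∈ Ω) (m : Fin n) :
    (∑ j, pdx j (RicUp g j m) p) + (∑ j, ∑ k, Chr g k j k p * RicUp g j m p)
      - (∑ j, ∑ k, Chr g k m j p * RicUp g j k p) = (1 / 2) * pdx m (scal g) p :=
  contracted_bianchi (e := ex) H.isOpen H.conn_smooth H.inv_smooth H.inv_symm H.compat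
    (fun _ hq i j k => H.Chr_symm hq k i j) (Ric g) H.Ric_eq_curv hp m

/-- The flow gives `R = ½ tr (g⁻¹ ∂_τ g)`. -/
lemma scal_eq_trace (q : E n) (hq : q ∈ Ω) :
    scal g q = (1 / 2) * (ginv g q * mD et g q).trace := by
  simp only [scal, Matrix.trace, Matrix.diag, Matrix.mul_apply, Finset.mul_sum]
  refine Finset.sum_congr rfl fun j _ => Finset.sum_congr rfl fun k _ => ?_
  have : mD et g q k j = 2 * Ric g k j q := H.flow q hq k j
  rw [this, H.Ric_symm hq j k]; ring

/-- `Γ^j_{ij} = ½ tr (g⁻¹ ∂_i g)`, the logarithmic derivative of the volume density. -/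
lemma Chr_trace (q : E n) (hq : q ∈ Ω) (i : Fin n) :
    ∑ j, Chr g j i j q = (1 / 2) * (ginv g q * mD (ex i) g q).trace := by
  have h1 : ∑ j, Chr g j i j q = (ginv g q * chr1 g i q).trace := by
    rw [← conn_eq]; rfl
  have h2 : (ginv g q * (chr1 g i q).transpose).trace = (ginv g q * chr1 g i q).trace := by
    rw [← Matrix.trace_transpose, Matrix.transpose_mul, Matrix.transpose_transpose,
      H.inv_symm q hq, Matrix.trace_mul_comm]
  rw [h1, ← H.chr1_add hq, Matrix.mul_add, Matrix.trace_add, h2]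
  ring

/-- `∂_τ Γ^j_{ij} = ∂_i R`: both are `½ ∂_i ∂_τ log det g`. -/
lemma dt_Chr_trace (hp : p ∈ Ω) (i : Fin n) :
    pdt (fun q => ∑ j, Chr g j i j q) p = pdx i (scal g) p := by
  have key : ∀ v w : E n, dd v (fun q => (1 / 2) * (ginv g q * mD w g q).trace) p
      = (1 / 2) * ((- (ginv g p * mD v g p * ginv g p) * mD w g p).trace
        + (ginv g p * mD v (mD w g) p).trace) := by
    intro v w
    have hw := H.sm.mD H.isOpen w
    rw [dd_mul H.isOpen hp (Sm.const _) (H.inv_smooth.mul hw).trace, dd_const,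
      dd_trace H.isOpen hp (H.inv_smooth.mul hw), mD_mul H.isOpen hp H.inv_smooth hw,
      H.mD_inv hp, Matrix.trace_add]
    ring
  have e1 : pdt (fun q => ∑ j, Chr g j i j q) p
      = dd et (fun q => (1 / 2) * (ginv g q * mD (ex i) g q).trace) p :=
    dd_congr H.isOpen hp fun q hq => H.Chr_trace q hq i
  have e2 : pdx i (scal g) p = dd (ex i) (fun q => (1 / 2) * (ginv g q * mD et g q).trace) p :=
    dd_congr H.isOpen hp H.scal_eq_trace
  rw [e1, e2, key, key, mD_comm H.isOpen hp H.sm (v := et)]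
  congr 2
  simp only [Matrix.neg_mul, Matrix.trace_neg]
  rw [Matrix.mul_assoc (ginv g p * mD et g p), Matrix.trace_mul_comm]
  simp only [Matrix.mul_assoc]

/-! ### Christoffel symbols and Ricci curvature of the soliton metric -/

section Hat

omit H in
lemma dd_ex_time {φ : ℝ → ℝ} (hφ : DifferentiableAt ℝ φ p.2) (i : Fin n) :
    dd (ex i) (fun q : E n => φ q.2) p = 0 := by
  have h : HasFDerivAt (fun q : E n => φ q.2)
      (deriv φ p.2 • ContinuousLinearMap.snd ℝ (Fin n → ℝ) ℝ) p :=
    hφ.hasDerivAt.comp_hasFDerivAt p hasFDerivAt_snd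
  simp [dd, h.fderiv, ex]

omit H in
lemma dd_et_time {φ : ℝ → ℝ} {φ' : ℝ} (hφ : HasDerivAt φ φ' p.2) :
    dd et (fun q : E n => φ q.2) p = φ' := by
  have h : HasFDerivAt (fun q : E n => φ q.2)
      (φ' • ContinuousLinearMap.snd ℝ (Fin n → ℝ) ℝ) p :=
    hφ.comp_hasFDerivAt p hasFDerivAt_snd
  simp [dd, h.fderiv, et]

omit H in
lemma snd_smooth : Sm Ω (fun q : E n => q.2) := contDiff_snd.contDiffOn

lemma time_inv_smooth : Sm Ω (fun q : E n => (q.2)⁻¹) :=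
  snd_smooth.inv fun q hq => (H.time q hq).ne'

lemma dx_div_time {f : E n → ℝ} (hf : Sm Ω f) (hp : p ∈ Ω) (i : Fin n) :
    dd (ex i) (fun q => f q / q.2) p = dd (ex i) f p / p.2 := by
  have h0 := (H.time p hp).ne'
  simp only [div_eq_mul_inv]
  rw [dd_mul H.isOpen hp hf H.time_inv_smooth,
    dd_ex_time (φ := fun t => t⁻¹) (differentiableAt_inv (𝕜 := ℝ) h0)]
  ring

lemma dt_div_time {f : E n → ℝ} (hf : Sm Ω f) (hp : p ∈ Ω) :
    dd et (fun q => f q / q.2) p = dd et f p / p.2 - f p / p.2 ^ 2 := by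
  have h0 := (H.time p hp).ne'
  simp only [div_eq_mul_inv]
  rw [dd_mul H.isOpen hp hf H.time_inv_smooth,
    dd_et_time (φ := fun t => t⁻¹) (hasDerivAt_inv h0)]
  ring

omit H in
lemma hatg_zs (N : ℕ) (i : Fin n) : hatg g N 0 i.succ = fun _ => 0 := rfl
omit H in
lemma hatg_sz (N : ℕ) (i : Fin n) : hatg g N i.succ 0 = fun _ => 0 := rfl
omit H in
lemma hatg_ss (N : ℕ) (i j : Fin n) : hatg g N i.succ j.succ = fun q => g q i j / q.2 := rfl
omit H in
lemma hatg_zz (N : ℕ) : hatg g N 0 0 = fun p : E n => (N : ℝ) / (2 * p.2 ^ 3) + scal g p / p.2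
    - (n : ℝ) / (2 * p.2 ^ 2) := rfl

omit H in
lemma hatginv_zs (N : ℕ) (i : Fin n) (q : E n) : hatginv g N 0 i.succ q = 0 := rfl
omit H in
lemma hatginv_sz (N : ℕ) (i : Fin n) (q : E n) : hatginv g N i.succ 0 q = 0 := rfl
omit H in
lemma hatginv_ss (N : ℕ) (i j : Fin n) (q : E n) :
    hatginv g N i.succ j.succ q = q.2 * ginv g q i j := rfl
omit H in
lemma hatginv_zz (N : ℕ) (q : E n) : hatginv g N 0 0 q = (hatg g N 0 0 q)⁻¹ := rfl

omit H in
lemma pd_zero (f : E n → ℝ) (p : E n) : pd 0 f p = dd et f p := rfl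
omit H in
lemma pd_succ (i : Fin n) (f : E n → ℝ) (p : E n) : pd i.succ f p = dd (ex i) f p := rfl

lemma hatg_zz_smooth (N : ℕ) : Sm Ω (hatg g N 0 0) := by
  have ht := H.time_inv_smooth
  refine (((((Sm.const ((N : ℝ) / 2)).mul ht).mul ht).mul ht).add (H.scal_smooth.mul ht)).sub
    (((Sm.const ((n : ℝ) / 2)).mul ht).mul ht) |>.congr fun q hq => ?_
  have h0 := (H.time q hq).ne'
  rw [hatg_zz]
  field_simp

lemma dx_hatg_zz (N : ℕ) (hp : p ∈ Ω) (i : Fin n) :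
    dd (ex i) (hatg g N 0 0) p = pdx i (scal g) p / p.2 := by
  have ht := H.time_inv_smooth
  have h0 := (H.time p hp).ne'
  have hd : DifferentiableAt ℝ
      (fun t : ℝ => (N : ℝ) / 2 * (t⁻¹) ^ 3 - (n : ℝ) / 2 * (t⁻¹) ^ 2) p.2 := by
    have := differentiableAt_inv (𝕜 := ℝ) h0
    fun_prop (disch := assumption)
  have hs : Sm Ω (fun q : E n => (N : ℝ) / 2 * ((q.2)⁻¹) ^ 3 - (n : ℝ) / 2 * ((q.2)⁻¹) ^ 2) := by
    have : ∀ m : ℕ, Sm Ω (fun q : E n => ((q.2)⁻¹) ^ m) := fun m => ContDiffOn.pow ht m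
    exact ((Sm.const _).mul (this 3)).sub ((Sm.const _).mul (this 2))
  have hc : ∀ q ∈ Ω, hatg g N 0 0 q = scal g q / q.2
      + ((N : ℝ) / 2 * ((q.2)⁻¹) ^ 3 - (n : ℝ) / 2 * ((q.2)⁻¹) ^ 2) := by
    intro q hq
    have h0 := (H.time q hq).ne'
    rw [hatg_zz]
    field_simp
    ring
  have hs' : Sm Ω (fun q => scal g q / q.2) := by
    simp only [div_eq_mul_inv]; exact H.scal_smooth.mul ht
  rw [dd_congr H.isOpen hp hc, dd_add H.isOpen hp hs' hs, dd_ex_time hd,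
    H.dx_div_time H.scal_smooth hp, add_zero]
  rfl

lemma dt_g (hq : q ∈ Ω) (i j : Fin n) : dd et (fun q => g q i j) q = 2 * Ric g i j q :=
  H.flow q hq i j

omit H in
/-- The mixed Christoffel symbols `Γ̂^k_{i0} = R^k_i - δ^k_i / (2τ)`. -/
def W (g : E n → Matrix (Fin n) (Fin n) ℝ) (k i : Fin n) (q : E n) : ℝ :=
  RicUp g k i q - (1 : Matrix (Fin n) (Fin n) ℝ) k i / (2 * q.2)

lemma W_eq (hq : q ∈ Ω) (k i : Fin n) :
    (1 / 2) * ∑ l, q.2 * ginv g q k l * (2 * Ric g i l q / q.2 - g q i l / q.2 ^ 2)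
      = W g k i q := by
  have h0 := (H.time q hq).ne'
  rw [W, ← H.inv_mul hq, Matrix.mul_apply, RicUp, Finset.mul_sum, Finset.sum_div,
    ← Finset.sum_sub_distrib]
  refine Finset.sum_congr rfl fun l _ => ?_
  rw [H.Ric_symm hq i l, H.g_symm' hq i l]
  field_simp

lemma hatChr_sss (N : ℕ) (hq : q ∈ Ω) (k i j : Fin n) :
    hatChr g N k.succ i.succ j.succ q = Chr g k i j q := by
  have h0 := (H.time q hq).ne'
  simp only [hatChr, Chr, Fin.sum_univ_succ, hatginv_sz, zero_mul, zero_add, hatginv_ss, pd_succ,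
    hatg_ss]
  congr 1
  refine Finset.sum_congr rfl fun l _ => ?_
  rw [H.dx_div_time (H.sm _ _) hq, H.dx_div_time (H.sm _ _) hq, H.dx_div_time (H.sm _ _) hq]
  change _ = _ * (dd (ex i) (fun q => g q j l) q + dd (ex j) (fun q => g q i l) q
    - dd (ex l) (fun q => g q i j) q)
  field_simp

lemma hatChr_ssz (N : ℕ) (hq : q ∈ Ω) (k i : Fin n) :
    hatChr g N k.succ i.succ 0 q = W g k i q := by
  rw [← H.W_eq hq]
  simp only [hatChr, Fin.sum_univ_succ, hatginv_sz, zero_mul, zero_add, hatginv_ss, pd_succ,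
    pd_zero, hatg_ss, hatg_zs, hatg_sz, dd_const, sub_zero]
  congr 1
  refine Finset.sum_congr rfl fun l _ => ?_
  rw [H.dt_div_time (H.sm _ _) hq, H.dt_g hq]

lemma hatChr_szs (N : ℕ) (hq : q ∈ Ω) (k i : Fin n) :
    hatChr g N k.succ 0 i.succ q = W g k i q := by
  rw [← H.W_eq hq]
  simp only [hatChr, Fin.sum_univ_succ, hatginv_sz, zero_mul, zero_add, hatginv_ss, pd_succ,
    pd_zero, hatg_ss, hatg_zs, dd_const, sub_zero, add_zero]
  congr 1
  refine Finset.sum_congr rfl fun l _ => ?_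
  rw [H.dt_div_time (H.sm _ _) hq, H.dt_g hq]

lemma hatChr_szz (N : ℕ) (hq : q ∈ Ω) (k : Fin n) :
    hatChr g N k.succ 0 0 q = - (1 / 2) * ∑ l, ginv g q k l * pdx l (scal g) q := by
  have h0 := (H.time q hq).ne'
  simp only [hatChr, Fin.sum_univ_succ, hatginv_sz, zero_mul, zero_add, hatginv_ss, pd_succ,
    pd_zero, hatg_zs, dd_const, zero_sub, H.dx_hatg_zz N hq, Finset.mul_sum]
  refine Finset.sum_congr rfl fun l _ => ?_
  field_simp

lemma hatChr_zss (N : ℕ) (hq : q ∈ Ω) (i j : Fin n) :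
    hatChr g N 0 i.succ j.succ q
      = - (hatg g N 0 0 q)⁻¹ * (Ric g i j q / q.2 - g q i j / (2 * q.2 ^ 2)) := by
  have h0 := (H.time q hq).ne'
  simp only [hatChr, Fin.sum_univ_succ, hatginv_zs, zero_mul, Finset.sum_const_zero, add_zero,
    hatginv_zz, pd_succ, pd_zero, hatg_ss, hatg_sz, dd_const, zero_sub]
  rw [H.dt_div_time (H.sm _ _) hq, H.dt_g hq]
  ring

lemma hatChr_zsz (N : ℕ) (hq : q ∈ Ω) (i : Fin n) :
    hatChr g N 0 i.succ 0 q = (hatg g N 0 0 q)⁻¹ * (pdx i (scal g) q / (2 * q.2)) := by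
  simp only [hatChr, Fin.sum_univ_succ, hatginv_zs, zero_mul, Finset.sum_const_zero, add_zero,
    hatginv_zz, pd_succ, pd_zero, hatg_sz, dd_const, sub_zero, H.dx_hatg_zz N hq]
  ring

lemma hatChr_zzs (N : ℕ) (hq : q ∈ Ω) (i : Fin n) :
    hatChr g N 0 0 i.succ q = (hatg g N 0 0 q)⁻¹ * (pdx i (scal g) q / (2 * q.2)) := by
  simp only [hatChr, Fin.sum_univ_succ, hatginv_zs, zero_mul, Finset.sum_const_zero, add_zero,
    hatginv_zz, pd_succ, pd_zero, hatg_sz, hatg_zs, dd_const, zero_add, sub_zero,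
    H.dx_hatg_zz N hq]
  ring

lemma W_smooth (k i : Fin n) : Sm Ω (W g k i) := by
  refine ((H.RicUp_smooth k i).sub
    ((Sm.const ((1 : Matrix (Fin n) (Fin n) ℝ) k i / 2)).mul H.time_inv_smooth)).congr fun q _ => ?_
  rw [W, div_mul_eq_div_div, div_eq_mul_inv _ q.2]

lemma dx_W (hp : p ∈ Ω) (m k i : Fin n) : dd (ex m) (W g k i) p = pdx m (RicUp g k i) p := by
  have h0 := (H.time p hp).ne'
  have hd : DifferentiableAt ℝ
      (fun t : ℝ => (1 : Matrix (Fin n) (Fin n) ℝ) k i / 2 * t⁻¹) p.2 := by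
    have := differentiableAt_inv (𝕜 := ℝ) h0
    fun_prop (disch := assumption)
  have hc : ∀ q ∈ Ω, W g k i q
      = RicUp g k i q - (1 : Matrix (Fin n) (Fin n) ℝ) k i / 2 * (q.2)⁻¹ := by
    intro q _
    rw [W, div_mul_eq_div_div, div_eq_mul_inv _ q.2]
  rw [dd_congr H.isOpen hp hc, dd_sub H.isOpen hp (H.RicUp_smooth k i)
    ((Sm.const _).mul H.time_inv_smooth), dd_ex_time hd, sub_zero]
  rfl

lemma sum_W (hq : q ∈ Ω) : ∑ k, W g k k q = scal g q - n / (2 * q.2) := by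
  simp only [W, Finset.sum_sub_distrib, Matrix.one_apply_eq, Finset.sum_const, Finset.card_univ,
    Fintype.card_fin, nsmul_eq_mul, RicUp, scal]
  congr 1
  · refine Finset.sum_congr rfl fun k _ => Finset.sum_congr rfl fun l _ => ?_
    rw [H.Ric_symm hq]
  · ring

/-- All terms of `R̂_{i0}`, after cancellation of the `∂_τ Γ̂⁰_{i0}` and `Γ̂⁰_{i0} Γ̂⁰_{00}` terms
and use of the contracted Bianchi identity and of `∂_τ Γ^j_{ij} = ∂_i R`. -/
lemma hatRic_sz (N : ℕ) (hF : ∀ q ∈ Ω, hatg g N 0 0 q ≠ 0) (hp : p ∈ Ω) (i : Fin n) :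
    hatRic g N i.succ 0 p = - (1 / 2) * pdx i (scal g) p
      + hatChr g N 0 i.succ 0 p * (scal g p - n / (2 * p.2))
      - ∑ j : Fin n, hatChr g N 0 i.succ j.succ p * hatChr g N j.succ 0 0 p := by
  have hY : Sm Ω (hatChr g N 0 i.succ 0) := by
    refine ((((H.hatg_zz_smooth N).inv hF).mul
      ((H.scal_smooth.dd H.isOpen (ex i)).mul H.time_inv_smooth)).mul (Sm.const (1 / 2))).congr
      fun q hq => ?_
    rw [H.hatChr_zsz N hq]
    change _ * (dd (ex i) (scal g) q / _) = _
    have h0 := (H.time q hq).ne'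
    field_simp
  have t2 : pd 0 (fun q => ∑ c, hatChr g N c i.succ c q) p
      = pd 0 (hatChr g N 0 i.succ 0) p + pdx i (scal g) p := by
    rw [← H.dt_Chr_trace hp i]
    have hc : ∀ q ∈ Ω, ∑ c, hatChr g N c i.succ c q
        = hatChr g N 0 i.succ 0 q + ∑ j, Chr g j i j q := by
      intro q hq
      simp only [Fin.sum_univ_succ, H.hatChr_sss N hq]
    rw [pd_zero, pd_zero, dd_congr H.isOpen hp hc, dd_add H.isOpen hp hY
      (Sm.sum (F := fun j => Chr g j i j) fun j => H.conn_smooth i j j)]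
    rfl
  have t1 : ∀ k : Fin n, pd k.succ (hatChr g N k.succ i.succ 0) p = pdx k (RicUp g k i) p := by
    intro k
    rw [pd_succ, dd_congr H.isOpen hp fun q hq => H.hatChr_ssz N hq k i, H.dx_W hp]
  have hb := H.bianchi hp i
  have hW := H.sum_W hp
  have s1 : ∑ j, W g j i p * ∑ k, Chr g k j k p
      = (∑ j, ∑ k, Chr g k j k p * RicUp g j i p) - (∑ k, Chr g k i k p) / (2 * p.2) := by
    simp only [W, sub_mul, Finset.sum_sub_distrib]
    congr 1
    · refine Finset.sum_congr rfl fun j _ => ?_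
      rw [Finset.mul_sum]
      exact Finset.sum_congr rfl fun k _ => mul_comm _ _
    · simp [Matrix.one_apply, ite_div, ite_mul]
      ring
  have s2 : ∑ j, ∑ k, Chr g k i j p * W g j k p
      = (∑ j, ∑ k, Chr g k i j p * RicUp g j k p) - (∑ k, Chr g k i k p) / (2 * p.2) := by
    simp only [W, mul_sub, Finset.sum_sub_distrib]
    congr 1
    simp [Matrix.one_apply, mul_ite, div_eq_mul_inv, Finset.sum_mul]
  rw [hatRic, t2]
  simp only [Fin.sum_univ_succ (n := n), t1, H.hatChr_sss N hp, H.hatChr_ssz N hp,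
    H.hatChr_szs N hp, Finset.sum_add_distrib, s1, s2, ← Finset.mul_sum, hW]
  have s3 : ∑ j, W g j i p * hatChr g N 0 j.succ 0 p
      = ∑ j, W g j i p * hatChr g N 0 0 j.succ p :=
    Finset.sum_congr rfl fun j _ => by rw [H.hatChr_zsz N hp, H.hatChr_zzs N hp]
  rw [s3]
  linarith

lemma hatHess_sz (N : ℕ) (hp : p ∈ Ω) (i : Fin n) :
    hatHess g N (fun q => (N : ℝ) / (2 * q.2)) i.succ 0 p
      = N / (2 * p.2 ^ 2) * hatChr g N 0 i.succ 0 p := by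
  have hderiv : ∀ t : ℝ, 0 < t →
      HasDerivAt (fun t : ℝ => (N : ℝ) / (2 * t)) (- (N / 2) * (t⁻¹) ^ 2) t := by
    intro t ht
    have h := (hasDerivAt_inv ht.ne').const_mul ((N : ℝ) / 2)
    have e : (fun t : ℝ => (N : ℝ) / (2 * t)) = fun t => (N : ℝ) / 2 * t⁻¹ := by
      funext t; rw [div_mul_eq_div_div, div_eq_mul_inv _ t]
    rw [e]
    refine h.congr_deriv ?_
    rw [inv_pow]; ring
  have h0 := (H.time p hp).ne'
  have hd : ∀ q ∈ Ω, pd 0 (fun q : E n => (N : ℝ) / (2 * q.2)) q = - (N / 2) * ((q.2)⁻¹) ^ 2 :=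
    fun q hq => dd_et_time (hderiv _ (H.time q hq))
  have hx : ∀ k : Fin n, pd k.succ (fun q : E n => (N : ℝ) / (2 * q.2)) p = 0 := fun k =>
    dd_ex_time (hderiv _ (H.time p hp)).differentiableAt k
  have hD : DifferentiableAt ℝ (fun t : ℝ => - ((N : ℝ) / 2) * (t⁻¹) ^ 2) p.2 := by
    have := differentiableAt_inv (𝕜 := ℝ) h0
    fun_prop (disch := assumption)
  rw [hatHess, pd_succ, dd_congr H.isOpen hp hd, dd_ex_time hD]
  simp only [Fin.sum_univ_succ (n := n), hx, hd p hp, zero_mul, Finset.sum_const_zero]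
  field_simp
  ring

omit H in
/-- The `N`-independent numerator of the mixed soliton component. -/
def defect (g : E n → Matrix (Fin n) (Fin n) ℝ) (i : Fin n) (q : E n) : ℝ :=
  pdx i (scal g) q / (4 * q.2 ^ 2)
    - (∑ j, Ric g i j q * ∑ l, ginv g q j l * pdx l (scal g) q) / (2 * q.2)

/-- The mixed soliton component is exactly `defect / ĝ₀₀`: since `½ ĝ₀₀` is
`N/(4τ³) + R/(2τ) - n/(4τ²)`, the leading terms sum to zero. -/
lemma soliton_mixed (N : ℕ) (hF : ∀ q ∈ Ω, hatg g N 0 0 q ≠ 0) (hp : p ∈ Ω) (i : Fin n) :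
    hatRic g N i.succ 0 p + hatHess g N (fun q => (N : ℝ) / (2 * q.2)) i.succ 0 p
      = defect g i p / hatg g N 0 0 p := by
  have h0 := (H.time p hp).ne'
  have hf := hF p hp
  -- contracting `g` with `g⁻¹ ∇R` returns `∇R`
  have hg : ∑ j, g p i j * ∑ l, ginv g p j l * pdx l (scal g) p = pdx i (scal g) p := by
    have : (g p).mulVec ((ginv g p).mulVec fun l => pdx l (scal g) p) = fun l => pdx l (scal g) p := by
      rw [Matrix.mulVec_mulVec, H.mul_inv hp, Matrix.one_mulVec]
    exact congrFun this i
  have hs : ∑ j : Fin n, hatChr g N 0 i.succ j.succ p * hatChr g N j.succ 0 0 p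
      = (hatg g N 0 0 p)⁻¹ * ((∑ j, Ric g i j p * ∑ l, ginv g p j l * pdx l (scal g) p) / (2 * p.2)
        - pdx i (scal g) p / (4 * p.2 ^ 2)) := by
    conv_rhs => rw [← hg]
    rw [Finset.sum_div, Finset.sum_div, ← Finset.sum_sub_distrib, Finset.mul_sum]
    refine Finset.sum_congr rfl fun j _ => ?_
    rw [H.hatChr_zss N hp, H.hatChr_szz N hp]
    field_simp
    ring
  rw [H.hatRic_sz N hF hp, H.hatHess_sz N hp, hs, H.hatChr_zsz N hp, defect]
  -- with `N` expressed through `F = ĝ₀₀` the identity is rational in the remaining quantities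
  have hFeq : (N : ℝ) = 2 * p.2 ^ 3 * (hatg g N 0 0 p - scal g p / p.2 + n / (2 * p.2 ^ 2)) := by
    rw [hatg_zz]
    field_simp
    ring
  generalize hatg g N 0 0 p = F at *
  rw [hFeq]
  field_simp
  ring

lemma defect_continuousOn (i : Fin n) : ContinuousOn (defect g i) Ω := by
  have ht : ContinuousOn (fun q : E n => q.2) Ω := continuous_snd.continuousOn
  have h1 : ∀ i, ContinuousOn (pdx i (scal g)) Ω := fun i =>
    ContDiffOn.continuousOn (H.scal_smooth.dd H.isOpen (ex i))
  have h2 : ∀ i j, ContinuousOn (Ric g i j) Ω := fun i j => (H.Ric_smooth i j).continuousOn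
  have h3 : ∀ i j, ContinuousOn (fun q => ginv g q i j) Ω := fun i j =>
    (H.inv_smooth i j).continuousOn
  refine ((h1 i).div (by fun_prop) fun q hq => ?_).sub (ContinuousOn.div ?_ (by fun_prop)
    fun q hq => ?_)
  · have := H.time q hq; positivity
  · exact continuousOn_finsetSum _ fun j _ => (h2 i j).mul
      (continuousOn_finsetSum _ fun l _ => (h3 j l).mul (h1 l))
  · have := H.time q hq; positivity

end Hat

end RevFlow

end Flow

/-! ### The estimate -/

/-- If `|R| ≤ C` and `0 < τ < b`, then `ĝ₀₀ ≥ N / (4 b³)` as soon as `N ≥ 2 (2 b² C + n b)`. -/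
lemma hatg_zz_lower {n : ℕ} (g : E n → Matrix (Fin n) (Fin n) ℝ) (N : ℕ) {p : E n} {b C : ℝ}
    (h0 : 0 < p.2) (hb : p.2 < b) (hC : |scal g p| ≤ C)
    (hN : 2 * (2 * b ^ 2 * C + n * b) ≤ N) : N / (4 * b ^ 3) ≤ hatg g N 0 0 p := by
  have hC0 : 0 ≤ C := (abs_nonneg _).trans hC
  have hb0 : 0 < b := h0.trans hb
  have e : hatg g N 0 0 p = (N + 2 * p.2 ^ 2 * scal g p - n * p.2) / (2 * p.2 ^ 3) := by
    rw [RevFlow.hatg_zz]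
    field_simp
  have h2 : -(b ^ 2 * C) ≤ p.2 ^ 2 * scal g p := by
    have h3 : |p.2 ^ 2 * scal g p| ≤ b ^ 2 * C := by
      rw [abs_mul, abs_of_pos (by positivity : 0 < p.2 ^ 2)]
      gcongr
    exact (abs_le.mp h3).1
  have h4 : (n : ℝ) * p.2 ≤ n * b := by gcongr
  have h5 : (N : ℝ) / 2 ≤ N + 2 * p.2 ^ 2 * scal g p - n * p.2 := by nlinarith
  rw [e]
  calc (N : ℝ) / (4 * b ^ 3) = (N / 2) / (2 * b ^ 3) := by ring
    _ ≤ (N / 2) / (2 * p.2 ^ 3) := by gcongr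
    _ ≤ _ := by gcongr

end CanonicalSoliton

theorem stmt13 (n : ℕ) (U : Set (Fin n → ℝ)) (hU : IsOpen U)
    (a b : ℝ) (ha : 0 ≤ a) (hab : a < b)
    (g : E n → Matrix (Fin n) (Fin n) ℝ)
    (hsmooth : ∀ i j, ContDiffOn ℝ (⊤ : ℕ∞) (fun p => g p i j) (U ×ˢ Set.Ioo a b))
    (hsymm : ∀ p ∈ U ×ˢ Set.Ioo a b, (g p).IsSymm)
    (hpos : ∀ p ∈ U ×ˢ Set.Ioo a b, (g p).PosDef)
    (hflow : ∀ p ∈ U ×ˢ Set.Ioo a b, ∀ j k : Fin n,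
      pdt (fun q => g q j k) p = 2 * Ric g j k p)
    (hRbd : ∃ C : ℝ, ∀ p ∈ U ×ˢ Set.Ioo a b, |scal g p| ≤ C) :
    ∀ K : Set (E n), K ⊆ U ×ˢ Set.Ioo a b → IsCompact K →
      ∃ N₀ : ℕ, ∃ C : ℝ, 0 < C ∧ ∀ N : ℕ, N₀ ≤ N →
        (∃ V : Set (E n), IsOpen V ∧ K ⊆ V ∧ V ⊆ U ×ˢ Set.Ioo a b ∧
          ∀ p ∈ V, 0 < hatg g N 0 0 p) ∧
        ∀ p ∈ K, ∀ i : Fin n,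
          |hatRic g N i.succ 0 p + hatHess g N (fun q => (N : ℝ) / (2 * q.2)) i.succ 0 p| ≤ C / (N : ℝ) := by
  intro K hK hKc
  obtain ⟨C, hC⟩ := hRbd
  have hb0 : 0 < b := ha.trans_lt hab
  have htime : ∀ q ∈ U ×ˢ Set.Ioo a b, 0 < q.2 := fun q hq => ha.trans_lt hq.2.1
  have H : RevFlow (U ×ˢ Set.Ioo a b) g :=
    ⟨hU.prod isOpen_Ioo, hsmooth, hsymm, hpos, hflow, htime⟩
  choose M hM using fun i => hKc.exists_bound_of_continuousOn ((H.defect_continuousOn i).mono hK)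
  obtain ⟨N₀, hN₀⟩ := exists_nat_ge (2 * (2 * b ^ 2 * C + n * b))
  refine ⟨N₀ + 1, 4 * b ^ 3 * ((∑ i, |M i|) + 1), by positivity, fun N hN => ?_⟩
  have hNpos : (0 : ℝ) < N := by exact_mod_cast (Nat.succ_pos _).trans_le hN
  have hlow : ∀ q ∈ U ×ˢ Set.Ioo a b, N / (4 * b ^ 3) ≤ hatg g N 0 0 q := fun q hq =>
    hatg_zz_lower g N (htime q hq) hq.2.2 (hC q hq)
      (hN₀.trans (by exact_mod_cast (Nat.le_succ _).trans hN))
  have hF : ∀ q ∈ U ×ˢ Set.Ioo a b, 0 < hatg g N 0 0 q := fun q hq =>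
    lt_of_lt_of_le (by positivity) (hlow q hq)
  refine ⟨⟨_, H.isOpen, hK, subset_rfl, hF⟩, fun p hp i => ?_⟩
  rw [H.soliton_mixed N (fun q hq => (hF q hq).ne') (hK hp), abs_div, abs_of_pos (hF p (hK hp))]
  have h1 : |RevFlow.defect g i p| ≤ (∑ i, |M i|) + 1 := by
    have h2 : |RevFlow.defect g i p| ≤ M i := hM i p hp
    have h3 : |M i| ≤ ∑ i, |M i| :=
      Finset.single_le_sum (f := fun i => |M i|) (fun _ _ => abs_nonneg _) (Finset.mem_univ i)
    linarith [le_abs_self (M i)]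
  calc |RevFlow.defect g i p| / hatg g N 0 0 p ≤ ((∑ i, |M i|) + 1) / (N / (4 * b ^ 3)) := by
        gcongr
        exact hlow p (hK hp)
    _ = _ := by field_simp
end
end
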